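/- Fix m ∈ ℕ. Let (F_n) be a sequence with F_n = P_n(N^{(n)}), N^{(n)} ~ γ_{K_n}, where P_n is a polynomial of total degree at most m. Write P_n = Q_n + R_n for the unique decomposition with Q_n in the linear span of the products ∏_i H_{k_i}(x_i) with Σ_i k_i = m and R_n a polynomial of total degree at most m−1, and set J_m F_n := Q_n(N^{(n)}). Assume: (i) the laws of J_m F_n converge weakly to N(0,1); (ii) sup_n E[F_n²] < ∞. Then for every q ≥ 1 there exist N ∈ ℕ and C > 0 such that E[ Γ[F_n,F_n]^{−q} ] ≤ C for all n ≥ N, where Γ[F_n,F_n] := Σ_{k=1}^{K_n} (∂_k P_n(N^{(n)}))². -/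

import Mathlib

open MeasureTheory ProbabilityTheory MvPolynomial Filter Topology

noncomputable def gaussPi (ι : Type) [Fintype ι] : Measure (ι → ℝ) :=
  Measure.pi fun _ => gaussianReal 0 1

noncomputable def hermiteProd {K : ℕ} (k : Fin K → ℕ) : MvPolynomial (Fin K) ℝ :=
  ∏ i, Polynomial.aeval (MvPolynomial.X i) (Polynomial.hermite (k i))

noncomputable def chaos (K m : ℕ) : Submodule ℝ (MvPolynomial (Fin K) ℝ) :=
  Submodule.span ℝ {P | ∃ k : Fin K → ℕ, ∑ i, k i = m ∧ P = hermiteProd k}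

noncomputable def sqField {ι : Type} [Fintype ι] (P : MvPolynomial ι ℝ) (x : ι → ℝ) : ℝ :=
  ∑ i, (eval x (pderiv i P)) ^ 2

def TendstoInLaw {E : Type} [MeasurableSpace E] [TopologicalSpace E]
    (μs : ℕ → Measure E) (μ : Measure E) : Prop :=
  ∀ f : BoundedContinuousFunction E ℝ,
    Tendsto (fun n => ∫ x, f x ∂μs n) atTop (𝓝 (∫ x, f x ∂μ))

open MeasureTheory ProbabilityTheory MvPolynomial Filter Topology

instance instProbGaussPi (ι : Type) [Fintype ι] : IsProbabilityMeasure (gaussPi ι) := by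
  unfold gaussPi; infer_instance

lemma integrable_pow_gaussianReal (k : ℕ) : Integrable (fun x : ℝ => x ^ k) (gaussianReal 0 1) := by
  have h := (memLp_id_gaussianReal' (μ := 0) (v := 1) (k : ENNReal) (by simp)).integrable_norm_pow'
  refine h.mono' (by fun_prop) (ae_of_all _ fun x => ?_)
  simp

lemma integrable_pdf_pow (k : ℕ) :
    Integrable (fun x : ℝ => x ^ k * gaussianPDFReal 0 1 x) := by
  have h := integrable_pow_gaussianReal k
  rw [gaussianReal_of_var_ne_zero _ (by simp)] at h
  rw [integrable_withDensity_iff_integrable_smul' (measurable_gaussianPDF _ _)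
    (ae_of_all _ fun _ ↦ gaussianPDF_lt_top)] at h
  refine h.congr (ae_of_all _ fun x => ?_)
  simp [mul_comm]

lemma stein_one (k : ℕ) : ∫ x : ℝ, x ^ (k + 1) ∂(gaussianReal 0 1) =
    ∫ x : ℝ, (k : ℝ) * x ^ (k - 1) ∂(gaussianReal 0 1) := by
  rw [integral_gaussianReal_eq_integral_smul (by simp), integral_gaussianReal_eq_integral_smul (by simp)]
  have hv : ∀ x : ℝ, HasDerivAt (gaussianPDFReal 0 1) (-x * gaussianPDFReal 0 1 x) x := by
    intro x
    have h1 : HasDerivAt (fun x : ℝ => -(x - 0)^2 / (2 * ((1:NNReal):ℝ))) (-x) x := by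
      have h0 := (((hasDerivAt_id x).sub_const 0).pow 2).neg.div_const (2 * ((1:NNReal):ℝ))
      refine h0.congr_deriv ?_
      simp only [id, sub_zero, NNReal.coe_one]; push_cast; ring
    have h2 := (h1.exp).const_mul ((√(2 * Real.pi * ((1:NNReal):ℝ)))⁻¹)
    unfold gaussianPDFReal
    exact h2.congr_deriv (by ring)
  have := integral_mul_deriv_eq_deriv_mul_of_integrable (u := fun x : ℝ => x ^ k)
    (u' := fun x : ℝ => (k : ℝ) * x ^ (k - 1)) (v := gaussianPDFReal 0 1)
    (v' := fun x => -x * gaussianPDFReal 0 1 x) (fun x _ => by simpa using hasDerivAt_pow k x) (fun x _ => hv x)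
    ?_ ?_ (integrable_pdf_pow k)
  · calc _ = ∫ x : ℝ, -(x ^ k * (-x * gaussianPDFReal 0 1 x)) := by
          congr 1; ext x; simp only [smul_eq_mul]; ring
      _ = _ := by
          rw [integral_neg, this, neg_neg]; congr 1; ext x; simp only [smul_eq_mul]; ring
  · refine (integrable_pdf_pow (k + 1)).neg.congr (ae_of_all _ fun x => ?_)
    simp only [Pi.neg_apply, Pi.mul_apply]; ring
  · refine ((integrable_pdf_pow (k - 1)).const_mul (k : ℝ)).congr (ae_of_all _ fun x => ?_)
    simp only [Pi.mul_apply]; ring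

set_option linter.unusedSectionVars false
section sec1
variable {ι : Type} [Fintype ι]

lemma integrable_eval (p : MvPolynomial ι ℝ) : Integrable (fun x => eval x p) (gaussPi ι) := by
  induction p using MvPolynomial.induction_on' with
  | monomial s a =>
    simp only [eval_monomial]
    refine Integrable.const_mul ?_ a
    simp only [Finsupp.prod_pow]
    unfold gaussPi
    exact Integrable.fintype_prod (f := fun i x => x ^ s i) (fun i => integrable_pow_gaussianReal (s i))
  | add p q hp hq => simp only [map_add]; exact hp.add hq

/-- Gaussian expectation of a polynomial. -/
noncomputable def EE (p : MvPolynomial ι ℝ) : ℝ := ∫ x, eval x p ∂(gaussPi ι)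

lemma EE_add (p q : MvPolynomial ι ℝ) : EE (p + q) = EE p + EE q := by
  simp only [EE, map_add]; exact integral_add (integrable_eval p) (integrable_eval q)

lemma EE_sub (p q : MvPolynomial ι ℝ) : EE (p - q) = EE p - EE q := by
  simp only [EE, map_sub]; exact integral_sub (integrable_eval p) (integrable_eval q)

lemma EE_C_mul (a : ℝ) (p : MvPolynomial ι ℝ) : EE (C a * p) = a * EE p := by
  simp only [EE, map_mul, eval_C]; exact integral_const_mul _ _

lemma EE_C (a : ℝ) : EE (C a : MvPolynomial ι ℝ) = a := by
  simp [EE]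

lemma EE_sum {κ : Type*} (s : Finset κ) (f : κ → MvPolynomial ι ℝ) :
    EE (∑ j ∈ s, f j) = ∑ j ∈ s, EE (f j) := by
  simp only [EE, map_sum]; exact integral_finsetSum _ (fun j _ => integrable_eval _)

lemma EE_mono {p q : MvPolynomial ι ℝ} (h : ∀ x, eval x p ≤ eval x q) : EE p ≤ EE q :=
  integral_mono (integrable_eval p) (integrable_eval q) h

lemma EE_nonneg {p : MvPolynomial ι ℝ} (h : ∀ x, 0 ≤ eval x p) : 0 ≤ EE p :=
  integral_nonneg h

lemma stein (i : ι) (p : MvPolynomial ι ℝ) : EE (X i * p) = EE (pderiv i p) := by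
  classical
  induction p using MvPolynomial.induction_on' with
  | monomial s a =>
    rw [X, monomial_mul, pderiv_monomial]
    simp only [EE, eval_monomial, Finsupp.prod_pow, one_mul]
    rw [integral_const_mul, integral_const_mul]
    unfold gaussPi
    rw [integral_fintype_prod_eq_prod (fun j (x : ℝ) => x ^ ((Finsupp.single i 1 + s : ι →₀ ℕ) j)),
      integral_fintype_prod_eq_prod (fun j (x : ℝ) => x ^ ((s - Finsupp.single i 1 : ι →₀ ℕ) j))]
    rw [mul_assoc]; congr 1
    rw [← Finset.mul_prod_erase _ _ (Finset.mem_univ i), ← Finset.mul_prod_erase _ _ (Finset.mem_univ i)]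
    rw [← mul_assoc]
    congr 1
    · have := stein_one (s i)
      simp only [Finsupp.add_apply, Finsupp.single_eq_same, Finsupp.coe_tsub, Pi.sub_apply]
      rw [add_comm, this, integral_const_mul]
    · refine Finset.prod_congr rfl fun j hj => ?_
      have hj' : j ≠ i := Finset.ne_of_mem_erase hj
      simp [hj']
  | add p q hp hq => rw [mul_add, EE_add, map_add, EE_add, hp, hq]

lemma pderiv_comm (i j : ι) (p : MvPolynomial ι ℝ) :
    pderiv i (pderiv j p) = pderiv j (pderiv i p) := by
  induction p using MvPolynomial.induction_on with
  | C a => simp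
  | add p q hp hq => simp [hp, hq]
  | mul_X p k hp =>
    classical
    simp only [pderiv_mul, map_add, pderiv_X, hp]
    have h1 : ∀ a b c : ι, pderiv a (Pi.single (M := fun _ => MvPolynomial ι ℝ) b 1 c) = 0 := by
      intro a b c
      by_cases h : c = b
      · subst h; simp
      · simp [h]
    rw [h1, h1]; ring

end sec1

open MeasureTheory ProbabilityTheory MvPolynomial Filter Topology
set_option linter.unusedSectionVars false
section sec2
variable {ι : Type} [Fintype ι]

/-- All monomials have degree `< n`. -/
def DL {ι : Type} (n : ℕ) (p : MvPolynomial ι ℝ) : Prop := ∀ s, coeff s p ≠ 0 → s.degree < n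

lemma DL_iff (n : ℕ) (p : MvPolynomial ι ℝ) : DL (n + 1) p ↔ p.totalDegree ≤ n := by
  unfold DL
  unfold totalDegree
  rw [Finset.sup_le_iff]
  simp only [mem_support_iff, Nat.lt_succ_iff]
  rfl

lemma DL_zero_iff (p : MvPolynomial ι ℝ) : DL 0 p ↔ p = 0 := by
  constructor
  · intro h; ext s; by_contra h'; exact absurd (h s (by simpa using h')) (by simp)
  · rintro rfl; intro s hs; simp at hs

lemma DL_zero (n : ℕ) : DL n (0 : MvPolynomial ι ℝ) := by intro s hs; simp at hs

lemma DL_mono {n k : ℕ} (h : n ≤ k) {p : MvPolynomial ι ℝ} (hp : DL n p) : DL k p :=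
  fun s hs => (hp s hs).trans_le h

lemma DL_add {n : ℕ} {p q : MvPolynomial ι ℝ} (hp : DL n p) (hq : DL n q) : DL n (p + q) := by
  intro s hs
  by_cases h : coeff s p = 0
  · apply hq s; intro h'; apply hs; simp [h, h']
  · exact hp s h

lemma DL_C_mul {n : ℕ} (a : ℝ) {p : MvPolynomial ι ℝ} (hp : DL n p) : DL n (C a * p) := by
  intro s hs
  apply hp s; intro h; apply hs; simp [h]

lemma DL_neg {n : ℕ} {p : MvPolynomial ι ℝ} (hp : DL n p) : DL n (-p) := by
  intro s hs
  apply hp s; simpa using hs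

lemma DL_sub {n : ℕ} {p q : MvPolynomial ι ℝ} (hp : DL n p) (hq : DL n q) : DL n (p - q) := by
  rw [sub_eq_add_neg]; exact DL_add hp (DL_neg hq)

lemma DL_sum {κ : Type*} (t : Finset κ) {n : ℕ} {f : κ → MvPolynomial ι ℝ} (h : ∀ j ∈ t, DL n (f j)) :
    DL n (∑ j ∈ t, f j) := by
  classical
  induction t using Finset.induction_on with
  | empty => simpa using DL_zero n
  | insert a t ha ih =>
    rw [Finset.sum_insert ha]
    exact DL_add (h a (by simp)) (ih fun j hj => h j (by simp [hj]))

lemma DL_monomial {n : ℕ} {s : ι →₀ ℕ} (a : ℝ) (h : s.degree < n) : DL n (monomial s a) := by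
  classical
  intro t ht
  rw [coeff_monomial] at ht
  by_cases h' : s = t
  · rwa [← h']
  · simp [h'] at ht

lemma DL_induction {n : ℕ} {motive : MvPolynomial ι ℝ → Prop} (h0 : motive 0)
    (hadd : ∀ p q, motive p → motive q → motive (p + q))
    (hmon : ∀ (s : ι →₀ ℕ) (a : ℝ), s.degree < n → motive (monomial s a))
    (p : MvPolynomial ι ℝ) (hp : DL n p) : motive p := by
  classical
  rw [p.as_sum]
  have : ∀ t : Finset (ι →₀ ℕ), (∀ s ∈ t, s.degree < n) → motive (∑ v ∈ t, monomial v (coeff v p)) := by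
    intro t
    induction t using Finset.induction_on with
    | empty => intro _; simpa using h0
    | insert a t ha ih =>
      intro h
      rw [Finset.sum_insert ha]
      exact hadd _ _ (hmon _ _ (h a (by simp))) (ih fun s hs => h s (by simp [hs]))
  exact this _ fun s hs => hp s (by simpa using hs)

lemma DL_X_mul {n : ℕ} (i : ι) {p : MvPolynomial ι ℝ} (hp : DL n p) : DL (n + 1) (X i * p) := by
  refine DL_induction (motive := fun p => DL (n+1) (X i * p)) (by simpa using DL_zero _) ?_ ?_ p hp
  · intro p q hp hq; rw [mul_add]; exact DL_add hp hq
  · intro s a h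
    rw [X, monomial_mul]
    apply DL_monomial
    rw [map_add, Finsupp.degree_single]; omega

lemma DL_pderiv {n : ℕ} (i : ι) {p : MvPolynomial ι ℝ} (hp : DL (n + 1) p) : DL n (pderiv i p) := by
  refine DL_induction (motive := fun p => DL n (pderiv i p)) (by simpa using DL_zero _) ?_ ?_ p hp
  · intro p q hp hq; rw [map_add]; exact DL_add hp hq
  · intro s a h
    rw [pderiv_monomial]
    by_cases hs : s i = 0
    · simp [hs, DL_zero]
    · apply DL_monomial
      have h1 : Finsupp.single i 1 ≤ s := by
        rw [Finsupp.single_le_iff]; omega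
      have := congrArg Finsupp.degree (tsub_add_cancel_of_le h1)
      rw [map_add, Finsupp.degree_single] at this
      omega

lemma DL_mul {a b : ℕ} {p q : MvPolynomial ι ℝ} (hp : DL (a + 1) p) (hq : DL (b + 1) q) :
    DL (a + b + 1) (p * q) := by
  rw [DL_iff] at *
  exact (totalDegree_mul p q).trans (add_le_add hp hq)

lemma DL_one {p : MvPolynomial ι ℝ} (hp : DL 1 p) : p = C (constantCoeff p) := by
  rw [DL_iff, Nat.le_zero, totalDegree_eq_zero_iff_eq_C] at hp
  simpa [constantCoeff_eq] using hp

/-- minus the Ornstein-Uhlenbeck operator. -/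
noncomputable def MM (p : MvPolynomial ι ℝ) : MvPolynomial ι ℝ :=
  ∑ i, (X i * pderiv i p - pderiv i (pderiv i p))

lemma MM_add (p q : MvPolynomial ι ℝ) : MM (p + q) = MM p + MM q := by
  simp only [MM, map_add, ← Finset.sum_add_distrib]; congr 1; ext1 i; ring

lemma ibp (p q : MvPolynomial ι ℝ) : EE (MM p * q) = ∑ i, EE (pderiv i p * pderiv i q) := by
  rw [MM, Finset.sum_mul, EE_sum]
  refine Finset.sum_congr rfl fun i _ => ?_
  have h := stein i (pderiv i p * q)
  rw [pderiv_mul, EE_add, ← mul_assoc] at h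
  rw [sub_mul, EE_sub, h]; ring

lemma pderiv_X_mul (i j : ι) (p : MvPolynomial ι ℝ) [DecidableEq ι] :
    pderiv i (X j * p) = X j * pderiv i p + if i = j then p else 0 := by
  rw [pderiv_mul, pderiv_X]
  by_cases h : i = j
  · subst h; simp; ring
  · simp [h, Ne.symm h]

lemma pderiv_MM (i : ι) (p : MvPolynomial ι ℝ) : pderiv i (MM p) = MM (pderiv i p) + pderiv i p := by
  classical
  simp only [MM, map_sum, map_sub, pderiv_X_mul]
  have : ∀ j, X j * pderiv i (pderiv j p) + (if i = j then pderiv j p else 0) - pderiv i (pderiv j (pderiv j p))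
     = (X j * pderiv j (pderiv i p) - pderiv j (pderiv j (pderiv i p))) + (if i = j then pderiv j p else 0) := by
    intro j
    rw [pderiv_comm i j, pderiv_comm i j, pderiv_comm i j]; ring
  simp only [this, Finset.sum_add_distrib, Finset.sum_ite_eq, Finset.mem_univ, if_true]

/-- carre du champ polynomial -/
noncomputable def Gam (p : MvPolynomial ι ℝ) : MvPolynomial ι ℝ := ∑ i, pderiv i p * pderiv i p

lemma EE_Gam (p : MvPolynomial ι ℝ) : EE (Gam p) = EE (MM p * p) := by
  rw [ibp, Gam, EE_sum]

lemma EE_MM_sq (p : MvPolynomial ι ℝ) :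
    EE (MM p * MM p) = EE (Gam p) + ∑ i, EE (Gam (pderiv i p)) := by
  rw [ibp]
  simp only [pderiv_MM, mul_add, EE_add, Finset.sum_add_distrib]
  rw [add_comm]
  congr 1
  · rw [Gam, EE_sum]
  · refine Finset.sum_congr rfl fun i _ => ?_
    rw [EE_Gam, mul_comm]

lemma EE_sq_nonneg (p : MvPolynomial ι ℝ) : 0 ≤ EE (p * p) :=
  EE_nonneg fun x => by rw [map_mul]; exact mul_self_nonneg _

lemma reverse_poincare : ∀ (D : ℕ) (f : MvPolynomial ι ℝ), DL (D + 1) f →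
    EE (Gam f) ≤ D * EE (f * f) ∧ EE (MM f * MM f) ≤ D * EE (Gam f) := by
  intro D
  induction D with
  | zero =>
    intro f hf
    have : ∀ i, pderiv i f = 0 := fun i => (DL_zero_iff _).1 (DL_pderiv i hf)
    have h1 : MM f = 0 := by simp [MM, this]
    have h2 : Gam f = 0 := by simp [Gam, this]
    simp [h1, h2, EE]
  | succ D ih =>
    intro f hf
    have h1 : EE (MM f * MM f) ≤ ((D + 1 : ℕ) : ℝ) * EE (Gam f) := by
      rw [EE_MM_sq]
      have : ∑ i, EE (Gam (pderiv i f)) ≤ ∑ i, (D : ℝ) * EE (pderiv i f * pderiv i f) :=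
        Finset.sum_le_sum fun i _ => (ih _ (DL_pderiv i hf)).1
      rw [← Finset.mul_sum, ← EE_sum Finset.univ (fun i => pderiv i f * pderiv i f)] at this
      push_cast
      have h3 : EE (∑ i, pderiv i f * pderiv i f) = EE (Gam f) := rfl
      rw [h3] at this
      linarith
    refine ⟨?_, h1⟩
    have h2 := EE_sq_nonneg (MM f - C ((D + 1 : ℕ) : ℝ) * f)
    have h3 : (MM f - C ((D + 1 : ℕ) : ℝ) * f) * (MM f - C ((D + 1 : ℕ) : ℝ) * f) =
      MM f * MM f - C (2 * ((D + 1 : ℕ) : ℝ)) * (MM f * f) + C (((D + 1 : ℕ) : ℝ)^2) * (f * f) := by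
      simp only [map_mul, map_pow, map_ofNat]; ring
    rw [h3, EE_add, EE_sub, EE_C_mul, EE_C_mul, ← EE_Gam] at h2
    have h4 : (0:ℝ) < ((D + 1 : ℕ) : ℝ) := by positivity
    set d : ℝ := ((D + 1 : ℕ) : ℝ)
    have : d * EE (Gam f) ≤ d * (d * EE (f * f)) := by nlinarith
    exact le_of_mul_le_mul_left this h4

lemma MM_mul_self (p : MvPolynomial ι ℝ) : MM (p * p) = 2 * (p * MM p) - 2 * Gam p := by
  simp only [MM, Gam, Finset.mul_sum, ← Finset.sum_sub_distrib]
  refine Finset.sum_congr rfl fun i _ => ?_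
  simp only [pderiv_mul, map_add]; ring

lemma gamma_lemma (m : ℕ) (p : MvPolynomial ι ℝ) (hM : MM p = C (m : ℝ) * p) (hD : DL (m + 1) p) :
    EE (Gam p) = m * EE (p * p) ∧
    EE (Gam p * Gam p) ≤ m ^ 2 / 3 * EE (p * p * (p * p)) := by
  have h1 : EE (Gam p) = m * EE (p * p) := by rw [EE_Gam, hM, mul_assoc, EE_C_mul]
  refine ⟨h1, ?_⟩
  have hg : DL (2 * m + 1) (p * p) := by rw [two_mul]; exact DL_mul hD hD
  have h2 := (reverse_poincare (2 * m) (p * p) hg).2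
  rw [EE_Gam] at h2
  have h3 : MM (p * p) = C (2 * (m:ℝ)) * (p * p) - C 2 * Gam p := by
    rw [MM_mul_self, hM]; simp only [map_mul, map_ofNat]; ring
  have h4 : EE (MM p * (p * (p * p))) = 3 * EE (Gam p * (p * p)) := by
    rw [ibp, Gam, Finset.sum_mul, EE_sum, Finset.mul_sum]
    refine Finset.sum_congr rfl fun i _ => ?_
    rw [← EE_C_mul]; congr 1
    simp only [pderiv_mul, map_ofNat]; ring
  have h5 : EE (MM p * (p * (p * p))) = m * EE (p * p * (p * p)) := by
    rw [hM, mul_assoc, EE_C_mul]; congr 2; ring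
  rw [h3] at h2
  have e1 : (C (2 * (m:ℝ)) * (p * p) - C 2 * Gam p) * (C (2 * (m:ℝ)) * (p * p) - C 2 * Gam p) =
     C (4 * (m:ℝ)^2) * (p * p * (p * p)) - C (8 * (m:ℝ)) * (Gam p * (p * p)) + C 4 * (Gam p * Gam p) := by
    simp only [map_mul, map_ofNat, map_pow]; ring
  have e2 : (C (2 * (m:ℝ)) * (p * p) - C 2 * Gam p) * (p * p) =
     C (2 * (m:ℝ)) * (p * p * (p * p)) - C 2 * (Gam p * (p * p)) := by
    simp only [map_mul, map_ofNat]; ring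
  rw [e1, e2, EE_add, EE_sub, EE_sub, EE_C_mul, EE_C_mul, EE_C_mul, EE_C_mul, EE_C_mul] at h2
  push_cast at h2
  have h6 : EE (Gam p * (p * p)) = m / 3 * EE (p * p * (p * p)) := by linarith
  rw [h6] at h2
  nlinarith

lemma hyper (m : ℕ) : ∃ A : ℝ, 0 < A ∧ ∀ (ι κ : Type) [Fintype ι] [Fintype κ] (V : κ → MvPolynomial ι ℝ),
    (∀ j, MM (V j) = C (m : ℝ) * V j) → (∀ j, DL (m + 1) (V j)) →
    EE ((∑ j, V j * V j) ^ 4) ≤ A * (EE (∑ j, V j * V j)) ^ 4 := by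
  induction m with
  | zero =>
    refine ⟨1, one_pos, fun ι κ _ _ V _ hD => ?_⟩
    have : (∑ j, V j * V j) = C (∑ j, constantCoeff (V j) * constantCoeff (V j)) := by
      rw [map_sum]; refine Finset.sum_congr rfl fun j _ => ?_
      rw [map_mul, ← DL_one (hD j)]
    rw [this, ← map_pow, EE_C, EE_C, one_mul]
  | succ m ih =>
    obtain ⟨A, hA, ih⟩ := ih
    refine ⟨2 * 14 ^ 4 * A * (m + 1) ^ 4, by positivity, fun ι κ _ _ V hM hD => ?_⟩
    have hI := ih ι (κ × ι) (fun ji => pderiv ji.2 (V ji.1)) ?_ ?_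
    · rw [Fintype.sum_prod_type] at hI
      set W := ∑ j, V j * V j with hW
      simp only at hI
      set B := ∑ j, ∑ i, pderiv i (V j) * pderiv i (V j) with hB
      have hEB : EE B = (m + 1) * EE W := by
        rw [hB, EE_sum, hW, EE_sum, Finset.mul_sum]
        refine Finset.sum_congr rfl fun j _ => ?_
        rw [show ∑ i, pderiv i (V j) * pderiv i (V j) = Gam (V j) from rfl, EE_Gam, hM, mul_assoc, EE_C_mul]
        push_cast; rfl
      have key : (m + 1) * EE (W ^ 4) = EE (B * W ^ 3 + C (3 / 2) * (W ^ 2 * ∑ i, pderiv i W * pderiv i W)) := by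
        have e1 : (m + 1) * EE (W ^ 4) = ∑ j, EE (MM (V j) * (V j * W ^ 3)) := by
          have : ((m:ℝ) + 1) = ((m + 1 : ℕ) : ℝ) := by push_cast; rfl
          simp only [hM, mul_assoc, EE_C_mul]
          rw [this, ← Finset.mul_sum, ← EE_sum]
          congr 2
          rw [pow_succ' W 3]; nth_rw 1 [hW]; rw [Finset.sum_mul]
          exact Finset.sum_congr rfl fun j _ => by ring
        rw [e1]
        simp only [ibp, ← EE_sum]
        congr 1
        rw [Finset.sum_comm]
        have hB2 : B = ∑ i, ∑ j, pderiv i (V j) * pderiv i (V j) := by rw [hB, Finset.sum_comm]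
        rw [hB2, Finset.sum_mul, Finset.mul_sum, Finset.mul_sum,
          ← Finset.sum_add_distrib]
        refine Finset.sum_congr rfl fun i _ => ?_
        have hd : pderiv i W = C 2 * ∑ j, V j * pderiv i (V j) := by
          rw [hW, map_sum, Finset.mul_sum]
          refine Finset.sum_congr rfl fun j _ => ?_
          rw [pderiv_mul]; simp only [map_ofNat]; ring
        have : ∀ j, pderiv i (V j) * pderiv i (V j * W ^ 3) =
          pderiv i (V j) * pderiv i (V j) * W ^ 3 + (C 3 * W ^ 2 * pderiv i W) * (V j * pderiv i (V j)) := by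
          intro j
          rw [pderiv_mul, pderiv_pow]
          simp only [map_ofNat]; push_cast; ring
        simp only [this]
        rw [Finset.sum_add_distrib, ← Finset.sum_mul, ← Finset.mul_sum]
        congr 1
        nth_rw 3 [hd]
        have : (C 3 : MvPolynomial ι ℝ) = C (3/2) * C 2 := by rw [← C_mul]; norm_num
        rw [this]; ring
      have hpt : ∀ x, eval x (B * W ^ 3 + C (3 / 2) * (W ^ 2 * ∑ i, pderiv i W * pderiv i W)) ≤
          eval x (C (1/2) * W ^ 4 + C (14 ^ 4) * B ^ 4) := by
        intro x
        simp only [map_add, map_mul, map_pow, eval_C, map_sum]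
        set w := eval x W with hw
        set b := eval x B with hb
        have hw' : w = ∑ j, eval x (V j) * eval x (V j) := by simp [hw, hW]
        have hb' : b = ∑ i, ∑ j, eval x (pderiv i (V j)) * eval x (pderiv i (V j)) := by
          rw [Finset.sum_comm]; simp [hb, hB]
        have hw0 : 0 ≤ w := by rw [hw']; exact Finset.sum_nonneg fun j _ => mul_self_nonneg _
        have hb0 : 0 ≤ b := by
          rw [hb']; exact Finset.sum_nonneg fun j _ => Finset.sum_nonneg fun i _ => mul_self_nonneg _
        have hg : ∑ i, eval x (pderiv i W) * eval x (pderiv i W) ≤ 4 * (w * b) := by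
          rw [hb', Finset.mul_sum, Finset.mul_sum]
          refine Finset.sum_le_sum fun i _ => ?_
          have : eval x (pderiv i W) = 2 * ∑ j, eval x (V j) * eval x (pderiv i (V j)) := by
            rw [hW, map_sum, map_sum, Finset.mul_sum]
            refine Finset.sum_congr rfl fun j _ => ?_
            rw [pderiv_mul]; simp only [map_add, map_mul]; ring
          rw [this, hw']
          have := Finset.sum_mul_sq_le_sq_mul_sq Finset.univ (fun j => eval x (V j)) (fun j => eval x (pderiv i (V j)))
          simp only [sq] at this
          linarith
        have h1 : b * w ^ 3 + 3 / 2 * (w ^ 2 * ∑ i, eval x (pderiv i W) * eval x (pderiv i W)) ≤ 7 * (b * w ^ 3) := by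
          have := mul_le_mul_of_nonneg_left hg (sq_nonneg w)
          nlinarith
        refine h1.trans ?_
        rcases le_total (14 * b) w with h | h
        · have : 14 * b * w ^ 3 ≤ w * w ^ 3 := mul_le_mul_of_nonneg_right h (by positivity)
          nlinarith [pow_nonneg hb0 4]
        · have : w ^ 3 ≤ (14 * b) ^ 3 := pow_le_pow_left₀ hw0 h 3
          have := mul_le_mul_of_nonneg_left this hb0
          nlinarith [pow_nonneg hb0 4, pow_nonneg hw0 4]
      have h2 := EE_mono hpt
      rw [← key, EE_add, EE_C_mul, EE_C_mul] at h2
      have h3 : 0 ≤ EE (W ^ 4) := EE_nonneg fun x => by rw [map_pow]; positivity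
      have h4 : EE (W ^ 4) ≤ 2 * 14 ^ 4 * EE (B ^ 4) := by
        have : 0 ≤ (m : ℝ) * EE (W ^ 4) := by positivity
        nlinarith
      rw [hEB] at hI
      calc _ ≤ 2 * 14 ^ 4 * EE (B ^ 4) := h4
        _ ≤ 2 * 14 ^ 4 * (A * ((m + 1) * EE W) ^ 4) := by gcongr
        _ = _ := by ring
    · rintro ⟨j, i⟩
      have := pderiv_MM i (V j)
      rw [hM, pderiv_C_mul] at this
      rw [← sub_eq_iff_eq_add] at this
      rw [← this]; push_cast; simp only [map_add, map_one]; ring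
    · rintro ⟨j, i⟩
      exact DL_pderiv i (hD j)
end sec2

open MeasureTheory ProbabilityTheory MvPolynomial Filter Topology
set_option linter.unusedSectionVars false
section sec3
variable {ι : Type} [Fintype ι]
variable {β σ : Type} [Fintype β] [DecidableEq β] [Fintype σ]

/-- polarised iterated derivatives. -/
noncomputable def Gl (o : β) : List β → MvPolynomial σ ℝ → MvPolynomial (β × σ) ℝ
  | [], p => rename (fun j => (o, j)) p
  | a :: l, p => ∑ j, X (a, j) * Gl o l (pderiv j p)

variable (o : β)

lemma Gl_add (l : List β) : ∀ p q : MvPolynomial σ ℝ, Gl o l (p + q) = Gl o l p + Gl o l q := by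
  induction l with
  | nil => intro p q; simp [Gl]
  | cons a l ih => intro p q; simp only [Gl, map_add, ih, mul_add, Finset.sum_add_distrib]

lemma Gl_C_mul (l : List β) : ∀ (a : ℝ) (p : MvPolynomial σ ℝ), Gl o l (C a * p) = C a * Gl o l p := by
  induction l with
  | nil => intro a p; simp [Gl]
  | cons b l ih =>
    intro a p; simp only [Gl, pderiv_C_mul, ih, Finset.mul_sum]
    exact Finset.sum_congr rfl fun j _ => by ring

lemma Gl_zero (l : List β) : Gl o l (0 : MvPolynomial σ ℝ) = 0 := by
  simpa using Gl_C_mul o l 0 (0 : MvPolynomial σ ℝ)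

lemma oinj : Function.Injective (fun j : σ => (o, j)) := fun a b h => by simpa using h

lemma pderiv_rename_of_ne (b : β) (hb : b ≠ o) (j : σ) (p : MvPolynomial σ ℝ) :
    pderiv (b, j) (rename (fun j => (o, j)) p) = 0 := by
  classical
  induction p using MvPolynomial.induction_on with
  | C a => simp
  | add p q hp hq => simp [hp, hq]
  | mul_X p i hp =>
    rw [map_mul, pderiv_mul, hp, rename_X, pderiv_X_of_ne]
    · simp
    · intro h; apply hb; simpa using (congrArg Prod.fst h).symm

lemma pderiv_Gl_o (l : List β) (ho : o ∉ l) (j : σ) : ∀ p : MvPolynomial σ ℝ,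
    pderiv (o, j) (Gl o l p) = Gl o l (pderiv j p) := by
  classical
  induction l with
  | nil => intro p; simp only [Gl]; exact pderiv_rename (oinj o) j p
  | cons a l ih =>
    intro p
    simp only [List.mem_cons, not_or] at ho
    simp only [Gl, map_sum, pderiv_X_mul]
    refine Finset.sum_congr rfl fun i _ => ?_
    rw [ih ho.2, pderiv_comm, if_neg (by intro h; exact ho.1 (congrArg Prod.fst h)), add_zero]

lemma pderiv_Gl_not_mem (l : List β) (b : β) (hb : b ≠ o) (hl : b ∉ l) (j : σ) : ∀ p : MvPolynomial σ ℝ,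
    pderiv (b, j) (Gl o l p) = 0 := by
  classical
  induction l with
  | nil => intro p; exact pderiv_rename_of_ne o b hb j p
  | cons a l ih =>
    intro p
    simp only [List.mem_cons, not_or] at hl
    simp only [Gl, map_sum, pderiv_X_mul]
    refine Finset.sum_eq_zero fun i _ => ?_
    rw [ih hl.2, if_neg (by intro h; exact hl.1 (congrArg Prod.fst h))]; simp

lemma pderiv_Gl_mem (l : List β) (hn : l.Nodup) (b : β) (hb : b ≠ o) (hl : b ∈ l) (j : σ) :
    ∀ p : MvPolynomial σ ℝ, pderiv (b, j) (Gl o l p) = Gl o (l.erase b) (pderiv j p) := by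
  classical
  induction l with
  | nil => simp at hl
  | cons a l ih =>
    intro p
    rw [List.nodup_cons] at hn
    by_cases h : a = b
    · subst h
      simp only [Gl, map_sum, pderiv_X_mul, List.erase_cons_head]
      simp only [pderiv_Gl_not_mem o l a hb hn.1, mul_zero, zero_add, Prod.mk.injEq, true_and,
        Finset.sum_ite_eq, Finset.mem_univ, if_true]
    · rw [List.erase_cons_tail (by simpa using h)]
      have hl' : b ∈ l := by
        rcases List.mem_cons.1 hl with h' | h'
        · exact absurd h'.symm h
        · exact h'
      simp only [Gl, map_sum, pderiv_X_mul]
      refine Finset.sum_congr rfl fun i _ => ?_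
      rw [ih hn.2 hl', if_neg (by intro h'; exact h (congrArg Prod.fst h').symm), add_zero, pderiv_comm]

lemma DL_Gl (l : List β) : ∀ (n : ℕ) (p : MvPolynomial σ ℝ), DL n p → DL n (Gl o l p) := by
  induction l with
  | nil =>
    intro n p hp
    rcases n with _ | n
    · rw [DL_zero_iff] at hp; subst hp; rw [Gl_zero]; exact DL_zero _
    · rw [DL_iff] at *
      exact (totalDegree_rename_le _ p).trans hp
  | cons a l ih =>
    intro n p hp
    rcases n with _ | n
    · rw [DL_zero_iff] at hp; subst hp; rw [Gl_zero]; exact DL_zero _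
    · exact DL_sum _ fun j _ => DL_X_mul _ (ih _ _ (DL_pderiv j hp))

lemma MM_X_mul (k : ι) (q : MvPolynomial ι ℝ) : MM (X k * q) = X k * MM q + X k * q - 2 * pderiv k q := by
  classical
  simp only [MM, pderiv_X_mul, map_add]
  have : ∀ i, X i * (X k * pderiv i q + if i = k then q else 0) -
      (X k * pderiv i (pderiv i q) + (if i = k then pderiv i q else 0) + pderiv i (if i = k then q else 0))
      = X k * (X i * pderiv i q - pderiv i (pderiv i q)) + if i = k then X k * q - 2 * pderiv k q else 0 := by
    intro i
    by_cases h : i = k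
    · subst h; simp only [if_true]; ring
    · simp only [if_neg h, map_zero]; ring
  simp only [this, Finset.sum_add_distrib, ← Finset.mul_sum, Finset.sum_ite_eq', Finset.mem_univ, if_true]
  ring

lemma MM_sum {κ : Type*} (t : Finset κ) (f : κ → MvPolynomial ι ℝ) :
    MM (∑ j ∈ t, f j) = ∑ j ∈ t, MM (f j) := by
  simp only [MM, map_sum, Finset.mul_sum, ← Finset.sum_sub_distrib]
  rw [Finset.sum_comm]

lemma MM_Gl (l : List β) (hn : l.Nodup) (ho : o ∉ l) : ∀ p : MvPolynomial σ ℝ, MM (Gl o l p) = Gl o l (MM p) := by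
  induction l with
  | nil =>
    intro p
    simp only [Gl]
    unfold MM
    rw [Fintype.sum_prod_type, Finset.sum_eq_single o]
    · simp only [map_sum, map_sub, map_mul, rename_X]
      refine Finset.sum_congr rfl fun j _ => ?_
      rw [pderiv_rename (oinj o) j p, pderiv_rename (oinj o) j]
    · intro b _ hb
      refine Finset.sum_eq_zero fun j _ => ?_
      rw [pderiv_rename_of_ne o b hb]; simp
    · simp
  | cons a l ih =>
    intro p
    rw [List.nodup_cons] at hn
    simp only [List.mem_cons, not_or] at ho
    simp only [Gl, MM_sum, MM_X_mul]
    refine Finset.sum_congr rfl fun j _ => ?_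
    rw [pderiv_Gl_not_mem o l a (Ne.symm ho.1) hn.1, ih hn.2 ho.2, pderiv_MM, Gl_add]; ring

/-- the squared gradient in the base block. -/
noncomputable def TT (l : List β) (p : MvPolynomial σ ℝ) : MvPolynomial (β × σ) ℝ :=
  ∑ j, Gl o l (pderiv j p) * Gl o l (pderiv j p)

lemma Gam_Gl (l : List β) (hn : l.Nodup) (ho : o ∉ l) (p : MvPolynomial σ ℝ) :
    Gam (Gl o l p) = TT o l p + ∑ b ∈ l.toFinset, TT o (l.erase b) p := by
  classical
  unfold Gam
  rw [Fintype.sum_prod_type]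
  have : ∀ b, ∑ j, pderiv (b, j) (Gl o l p) * pderiv (b, j) (Gl o l p) =
      (if b = o then TT o l p else 0) + (if b ∈ l.toFinset then TT o (l.erase b) p else 0) := by
    intro b
    by_cases hb : b = o
    · subst hb
      simp only [pderiv_Gl_o _ l ho, if_true, List.mem_toFinset, if_neg ho, add_zero]; rfl
    · by_cases hl : b ∈ l
      · simp only [pderiv_Gl_mem o l hn b hb hl, if_neg hb, List.mem_toFinset, if_pos hl, zero_add]; rfl
      · simp only [pderiv_Gl_not_mem o l b hb hl, if_neg hb, List.mem_toFinset, if_neg hl]; simp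
  simp only [this, Finset.sum_add_distrib, Finset.sum_ite_eq', Finset.sum_ite_mem, Finset.mem_univ, if_true,
    Finset.univ_inter]

lemma pderiv_TT (l : List β) (b : β) (hb : b ≠ o) (hl : b ∉ l) (j : σ) (p : MvPolynomial σ ℝ) :
    pderiv (b, j) (TT o l p) = 0 := by
  simp only [TT, map_sum, pderiv_mul, pderiv_Gl_not_mem o l b hb hl]; simp

lemma Gl_moment (a : β) (l : List β) (ha : a ≠ o) (hl : a ∉ l) (p : MvPolynomial σ ℝ) (q : MvPolynomial (β × σ) ℝ) :
    EE (Gl o (a :: l) p * q) = ∑ j, EE (Gl o l (pderiv j p) * pderiv (a, j) q) := by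
  have : Gl o (a :: l) p * q = ∑ j, X (a, j) * (Gl o l (pderiv j p) * q) := by
    simp only [Gl, Finset.sum_mul, mul_assoc]
  rw [this, EE_sum]
  refine Finset.sum_congr rfl fun j _ => ?_
  rw [stein, pderiv_mul, pderiv_Gl_not_mem o l a ha hl, zero_mul, zero_add]

lemma Gl_moments (a : β) (l : List β) (hn : (a :: l).Nodup) (ho : o ∉ a :: l) (p : MvPolynomial σ ℝ) :
    EE (Gl o (a :: l) p * Gl o (a :: l) p) = EE (TT o l p) ∧
    EE (Gl o (a :: l) p * Gl o (a :: l) p * (Gl o (a :: l) p * Gl o (a :: l) p))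
      = 3 * EE (TT o l p * TT o l p) := by
  have ha : a ≠ o := by rintro rfl; simp at ho
  have hl : a ∉ l := (List.nodup_cons.1 hn).1
  have hd : ∀ j, pderiv (a, j) (Gl o (a :: l) p) = Gl o l (pderiv j p) := by
    intro j; rw [pderiv_Gl_mem o _ hn a ha (by simp)]; simp
  constructor
  · rw [Gl_moment o a l ha hl, TT, EE_sum]; simp only [hd]
  · rw [mul_assoc, Gl_moment o a l ha hl]
    have e1 : EE (Gl o (a :: l) p * (Gl o (a :: l) p * TT o l p)) = EE (TT o l p * TT o l p) := by
      rw [Gl_moment o a l ha hl]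
      simp only [pderiv_mul, hd, pderiv_TT o l a ha hl, mul_zero, add_zero, ← mul_assoc]
      rw [← EE_sum, ← Finset.sum_mul]; rfl
    rw [← e1, ← EE_C_mul, ← EE_sum]
    congr 1
    simp only [pderiv_mul, hd, TT, Finset.mul_sum]
    refine Finset.sum_congr rfl fun j _ => ?_
    simp only [map_ofNat]; ring

/-- descending factorial -/
noncomputable def cc (m k : ℕ) : ℝ := ∏ i ∈ Finset.range k, ((m : ℝ) - i)

lemma tower_mean (m : ℕ) (p : MvPolynomial σ ℝ) (hM : MM p = C (m : ℝ) * p) (hD : DL (m + 1) p) :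
    ∀ (k : ℕ) (l : List β), l.length = k → l.Nodup → o ∉ l →
    EE (TT o l p) = cc m (k + 1) * EE (Gl o [] p * Gl o [] p) := by
  have hMl : ∀ l : List β, l.Nodup → o ∉ l → MM (Gl o l p) = C (m : ℝ) * Gl o l p := by
    intro l hn ho; rw [MM_Gl o l hn ho, hM, Gl_C_mul]
  intro k
  induction k with
  | zero =>
    intro l hl hn ho
    rw [List.length_eq_zero_iff] at hl; subst hl
    have h := (gamma_lemma m _ (hMl [] hn ho) (DL_Gl o [] _ _ hD)).1
    rw [Gam_Gl o [] hn ho] at h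
    simp only [List.toFinset_nil, Finset.sum_empty, add_zero] at h
    rw [h]; simp [cc]
  | succ k ih =>
    intro l hl hn ho
    have h := (gamma_lemma m _ (hMl l hn ho) (DL_Gl o l _ _ hD)).1
    rw [Gam_Gl o l hn ho, EE_add, EE_sum] at h
    have h2 : ∀ b ∈ l.toFinset, EE (TT o (l.erase b) p) = cc m (k + 1) * EE (Gl o [] p * Gl o [] p) := by
      intro b hb
      rw [List.mem_toFinset] at hb
      exact ih _ (by rw [List.length_erase_of_mem hb, hl]; rfl) (hn.erase b) (fun h => ho (List.mem_of_mem_erase h))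
    rw [Finset.sum_congr rfl h2, Finset.sum_const, List.toFinset_card_of_nodup hn, hl] at h
    have h3 : EE (Gl o l p * Gl o l p) = cc m (k + 1) * EE (Gl o [] p * Gl o [] p) := by
      rcases l with _ | ⟨a, l⟩
      · simp at hl
      · rw [(Gl_moments o a l hn ho p).1]
        exact ih l (by simpa using hl) (List.nodup_cons.1 hn).2 (fun h => ho (by simp [h]))
    rw [h3] at h
    have h4 : cc m (k + 1 + 1) = cc m (k + 1) * ((m : ℝ) - (k + 1 : ℕ)) := by
      rw [cc, Finset.prod_range_succ]; rfl
    rw [h4]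
    rw [nsmul_eq_mul] at h
    linear_combination h

lemma EE_center (p : MvPolynomial ι ℝ) : 
    EE ((p - C (EE p)) * (p - C (EE p))) = EE (p * p) - EE p ^ 2 := by
  have : (p - C (EE p)) * (p - C (EE p)) = p * p - C (2 * EE p) * p + C (EE p ^ 2) := by
    simp only [map_mul, map_ofNat, map_pow]; ring
  rw [this, EE_add, EE_sub, EE_C_mul, EE_C]; ring

lemma tower_var (m k : ℕ) : ∃ A : ℝ, 0 ≤ A ∧ ∀ (β σ : Type) [Fintype β] [DecidableEq β] [Fintype σ] (o : β)
    (p : MvPolynomial σ ℝ), MM p = C (m : ℝ) * p → DL (m + 1) p → 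
    ∀ (l : List β), l.length = k → l.Nodup → o ∉ l →
    EE (TT o l p * TT o l p) - EE (TT o l p) ^ 2 ≤
      A * (EE (Gl o [] p * Gl o [] p * (Gl o [] p * Gl o [] p)) - 3 * EE (Gl o [] p * Gl o [] p) ^ 2) := by
  induction k with
  | zero =>
    refine ⟨m ^ 2 / 3, by positivity, ?_⟩
    intro β σ _ _ _ o p hM hD l hl hn ho
    rw [List.length_eq_zero_iff] at hl; subst hl
    have hMl : MM (Gl o [] p) = C (m : ℝ) * Gl o [] p := by
      rw [MM_Gl o [] hn ho, hM, Gl_C_mul]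
    have h := gamma_lemma m _ hMl (DL_Gl o [] _ _ hD)
    rw [Gam_Gl o [] hn ho] at h
    simp only [List.toFinset_nil, Finset.sum_empty, add_zero] at h
    rw [h.1]
    linarith [h.2]
  | succ k ih =>
    obtain ⟨A, hA, ih⟩ := ih
    refine ⟨2 * m ^ 2 * A + 2 * (k + 1) * ((k + 1) * A), by positivity, ?_⟩
    intro β σ _ _ _ o p hM hD l hl hn ho
    set κ := EE (Gl o [] p * Gl o [] p * (Gl o [] p * Gl o [] p)) - 3 * EE (Gl o [] p * Gl o [] p) ^ 2
    have hMl : MM (Gl o l p) = C (m : ℝ) * Gl o l p := by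
      rw [MM_Gl o l hn ho, hM, Gl_C_mul]
    have hg := gamma_lemma m _ hMl (DL_Gl o l _ _ hD)
    have hv : EE (Gam (Gl o l p) * Gam (Gl o l p)) - EE (Gam (Gl o l p)) ^ 2 ≤ m ^ 2 * (A * κ) := by
      rcases l with _ | ⟨a, l⟩
      · simp at hl
      · obtain ⟨h1, h2⟩ := Gl_moments o a l hn ho p
        have := ih β σ o p hM hD l (by simpa using hl) (List.nodup_cons.1 hn).2 (fun h => ho (by simp [h]))
        rw [h1, h2] at hg
        have h3 := mul_le_mul_of_nonneg_left this (sq_nonneg (m:ℝ))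
        rw [hg.1]
        nlinarith [hg.2]
    have h2 : ∀ b ∈ l.toFinset, EE (TT o (l.erase b) p * TT o (l.erase b) p) - EE (TT o (l.erase b) p) ^ 2 ≤ A * κ := by
      intro b hb
      rw [List.mem_toFinset] at hb
      exact ih β σ o p hM hD _ (by rw [List.length_erase_of_mem hb, hl]; rfl) (hn.erase b) 
        (fun h => ho (List.mem_of_mem_erase h))
    have hT : TT o l p = Gam (Gl o l p) - ∑ b ∈ l.toFinset, TT o (l.erase b) p := by
      rw [Gam_Gl o l hn ho]; ring
    have hc : TT o l p - C (EE (TT o l p)) = (Gam (Gl o l p) - C (EE (Gam (Gl o l p)))) - 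
        ∑ b ∈ l.toFinset, (TT o (l.erase b) p - C (EE (TT o (l.erase b) p))) := by
      rw [Finset.sum_sub_distrib, ← map_sum, ← EE_sum, hT, EE_sub]
      simp only [map_sub]; ring
    rw [← EE_center, hc]
    rw [← EE_center] at hv
    set G := Gam (Gl o l p) - C (EE (Gam (Gl o l p)))
    set U : β → MvPolynomial (β × σ) ℝ := fun b => TT o (l.erase b) p - C (EE (TT o (l.erase b) p)) with hU
    have h2' : ∀ b ∈ l.toFinset, EE (U b * U b) ≤ A * κ := by
      intro b hb; rw [hU]; simp only; rw [EE_center]; exact h2 b hb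
    have hpt : ∀ x, eval x ((G - ∑ b ∈ l.toFinset, U b) * (G - ∑ b ∈ l.toFinset, U b)) ≤
        eval x (C (2:ℝ) * (G * G) + C (2 * ((k:ℝ) + 1)) * ∑ b ∈ l.toFinset, U b * U b) := by
      intro x
      simp only [map_mul, map_sub, map_add, eval_C, map_sum]
      have := sq_sum_le_card_mul_sum_sq (s := l.toFinset) (f := fun b => eval x (U b))
      rw [List.toFinset_card_of_nodup hn, hl] at this
      simp only [sq] at this
      push_cast at this
      set s := ∑ b ∈ l.toFinset, eval x (U b)
      set g := eval x G
      nlinarith [sq_nonneg (g + s)]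
    refine (EE_mono hpt).trans ?_
    rw [EE_add, EE_C_mul, EE_C_mul, EE_sum]
    have h3 := Finset.sum_le_sum h2'
    rw [Finset.sum_const, List.toFinset_card_of_nodup hn, hl, nsmul_eq_mul] at h3
    push_cast at h3
    have h4 : (0:ℝ) ≤ 2 * (k + 1) := by positivity
    have := mul_le_mul_of_nonneg_left h3 h4
    nlinarith

end sec3

open MeasureTheory ProbabilityTheory MvPolynomial Filter Topology
set_option linter.unusedSectionVars false
section sec4

lemma hermite_deriv (n : ℕ) : Polynomial.derivative (Polynomial.hermite (n + 1)) = 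
    ((n : ℤ) + 1) • Polynomial.hermite n := by
  induction n with
  | zero => simp
  | succ n ih =>
    rw [Polynomial.hermite_succ (n + 1)]
    rw [map_sub, Polynomial.derivative_mul, Polynomial.derivative_X, ih, Polynomial.derivative_smul,
      Polynomial.hermite_succ n]
    simp only [zsmul_eq_mul]
    push_cast
    ring

lemma hermite_ode (n : ℕ) : Polynomial.X * Polynomial.derivative (Polynomial.hermite n) -
    Polynomial.derivative (Polynomial.derivative (Polynomial.hermite n)) = (n : ℤ) • Polynomial.hermite n := by
  rcases n with _ | n
  · simp
  · rw [hermite_deriv, Polynomial.derivative_smul, Polynomial.hermite_succ n]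
    simp only [zsmul_eq_mul]
    push_cast; ring

variable {ι : Type} [Fintype ι]

lemma pderiv_aeval_same (i : ι) (h : Polynomial ℤ) :
    pderiv i (Polynomial.aeval (X i : MvPolynomial ι ℝ) h) = Polynomial.aeval (X i) (Polynomial.derivative h) := by
  have := Derivation.map_aeval ((pderiv i : Derivation ℝ (MvPolynomial ι ℝ) (MvPolynomial ι ℝ)).restrictScalars ℤ) h (X i : MvPolynomial ι ℝ)
  rw [Derivation.restrictScalars_apply, Derivation.restrictScalars_apply, pderiv_X_self] at this
  simpa only [smul_eq_mul, mul_one] using this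

lemma pderiv_aeval_ne {i j : ι} (hij : j ≠ i) (h : Polynomial ℤ) :
    pderiv i (Polynomial.aeval (X j : MvPolynomial ι ℝ) h) = 0 := by
  have := Derivation.map_aeval ((pderiv i : Derivation ℝ (MvPolynomial ι ℝ) (MvPolynomial ι ℝ)).restrictScalars ℤ) h (X j : MvPolynomial ι ℝ)
  rw [Derivation.restrictScalars_apply, Derivation.restrictScalars_apply, pderiv_X_of_ne hij] at this
  simpa only [smul_eq_mul, mul_zero] using this

lemma pderiv_prod_zero {κ : Type} (i : ι) (t : Finset κ) (f : κ → MvPolynomial ι ℝ) (h : ∀ j ∈ t, pderiv i (f j) = 0) :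
    pderiv i (∏ j ∈ t, f j) = 0 := by
  classical
  induction t using Finset.induction_on with
  | empty => simp
  | insert a t ha ih =>
    rw [Finset.prod_insert ha, pderiv_mul, h a (by simp), ih fun j hj => h j (by simp [hj])]; simp

lemma MM_hermiteProd {K : ℕ} (k : Fin K → ℕ) : MM (hermiteProd k) = C ((∑ i, k i : ℕ) : ℝ) * hermiteProd k := by
  classical
  unfold MM
  push_cast
  rw [map_sum, Finset.sum_mul]
  refine Finset.sum_congr rfl fun i _ => ?_
  unfold hermiteProd
  rw [← Finset.mul_prod_erase _ _ (Finset.mem_univ i)]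
  set Rr := ∏ x ∈ Finset.univ.erase i, (Polynomial.aeval (X x : MvPolynomial (Fin K) ℝ)) (Polynomial.hermite (k x))
  have hR : pderiv i Rr = 0 := pderiv_prod_zero i _ _ fun j hj => pderiv_aeval_ne (Finset.ne_of_mem_erase hj) _
  simp only [pderiv_mul, hR, mul_zero, add_zero, pderiv_aeval_same]
  have := congrArg (Polynomial.aeval (X i : MvPolynomial (Fin K) ℝ)) (hermite_ode (k i))
  simp only [map_sub, map_mul, Polynomial.aeval_X, map_zsmul] at this
  rw [← mul_assoc, ← sub_mul, this, ← mul_assoc]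
  simp

lemma MM_chaos {K m : ℕ} {Q : MvPolynomial (Fin K) ℝ} (hQ : Q ∈ chaos K m) : MM Q = C (m : ℝ) * Q := by
  unfold chaos at hQ
  induction hQ using Submodule.span_induction with
  | mem x hx =>
    obtain ⟨k, hk, rfl⟩ := hx
    rw [MM_hermiteProd, hk]
  | zero => simp [MM]
  | add x y _ _ hx hy => rw [MM_add, hx, hy]; ring
  | smul a x _ hx =>
    rw [smul_eq_C_mul]
    have : MM (C a * x) = C a * MM x := by
      simp only [MM, pderiv_C_mul, Finset.mul_sum]
      exact Finset.sum_congr rfl fun i _ => by ring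
    rw [this, hx]; ring

lemma trunc_lemma (μs : ℕ → Measure ℝ) (μ : Measure ℝ) [∀ n, IsProbabilityMeasure (μs n)] [IsProbabilityMeasure μ]
    (h : TendstoInLaw μs μ) (g : ℝ → ℝ) (hg : Continuous g) (hg0 : ∀ x, 0 ≤ g x) (B : ℝ)
    (hi : ∀ n, Integrable g (μs n)) (hi2 : ∀ n, Integrable (fun x => g x ^ 2) (μs n))
    (hj : Integrable g μ) (hj2 : Integrable (fun x => g x ^ 2) μ)
    (hB : ∀ᶠ n in atTop, ∫ x, g x ^ 2 ∂(μs n) ≤ B) (hB' : ∫ x, g x ^ 2 ∂μ ≤ B) :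
    Tendsto (fun n => ∫ x, g x ∂(μs n)) atTop (𝓝 (∫ x, g x ∂μ)) := by
  have hB0 : 0 ≤ B := (integral_nonneg fun x => sq_nonneg (g x)).trans hB'
  rw [Metric.tendsto_atTop]
  intro ε hε
  set R : ℝ := 4 * (B + 1) / ε with hR
  have hRpos : 0 < R := by positivity
  let f : BoundedContinuousFunction ℝ ℝ := BoundedContinuousFunction.ofNormedAddCommGroup (fun x => min (g x) R)
    (by fun_prop) R (fun x => by rw [Real.norm_eq_abs, abs_of_nonneg (le_min (hg0 x) hRpos.le)]; exact min_le_right _ _)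
  have hf := h f
  rw [Metric.tendsto_atTop] at hf
  obtain ⟨N1, hN1⟩ := hf (ε / 2) (by positivity)
  obtain ⟨N2, hN2⟩ := eventually_atTop.1 hB
  have key : ∀ (ν : Measure ℝ) [IsProbabilityMeasure ν], Integrable g ν → Integrable (fun x => g x ^ 2) ν →
      ∫ x, g x ^ 2 ∂ν ≤ B → 0 ≤ ∫ x, g x ∂ν - ∫ x, f x ∂ν ∧ ∫ x, g x ∂ν - ∫ x, f x ∂ν ≤ B / R := by
    intro ν _ h1 h2 h3
    have hfi : Integrable f ν := f.integrable ν
    rw [← integral_sub h1 hfi]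
    constructor
    · exact integral_nonneg fun x => sub_nonneg.2 (min_le_left _ _)
    · calc ∫ x, (g x - f x) ∂ν ≤ ∫ x, g x ^ 2 / R ∂ν := by
            refine integral_mono (h1.sub hfi) (h2.div_const R) fun x => ?_
            show g x - min (g x) R ≤ g x ^ 2 / R
            rcases le_total (g x) R with h | h
            · rw [min_eq_left h, sub_self]; positivity
            · rw [min_eq_right h, le_div_iff₀ hRpos]; nlinarith [hg0 x]
        _ = (∫ x, g x ^ 2 ∂ν) / R := integral_div _ _
        _ ≤ B / R := by gcongr
  have hBR : B / R < ε / 4 + ε / 4 := by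
    rw [hR, div_div_eq_mul_div, div_lt_iff₀ (by positivity)]; nlinarith
  have hBR' : B / R ≤ ε / 4 := by
    rw [hR, div_div_eq_mul_div, div_le_iff₀ (by positivity)]; nlinarith
  refine ⟨max N1 N2, fun n hn => ?_⟩
  have h1 := hN1 n ((le_max_left _ _).trans hn)
  have h2 := key (μs n) (hi n) (hi2 n) (hN2 n ((le_max_right _ _).trans hn))
  have h3 := key μ hj hj2 hB'
  rw [Real.dist_eq, abs_lt] at *
  constructor <;> linarith [h1.1, h1.2, h2.1, h2.2, h3.1, h3.2]

lemma gauss_moment2 : ∫ x : ℝ, x ^ 2 ∂(gaussianReal 0 1) = 1 := by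
  rw [stein_one 1]; simp

lemma gauss_moment4 : ∫ x : ℝ, x ^ 4 ∂(gaussianReal 0 1) = 3 := by
  rw [stein_one 3, integral_const_mul]; norm_num [gauss_moment2]

lemma moment_bdd (μs : ℕ → Measure ℝ) [∀ n, IsProbabilityMeasure (μs n)]
    (h : TendstoInLaw μs (gaussianReal 0 1)) (A : ℝ) (hA : 0 < A) 
    (hi : ∀ n k, Integrable (fun x : ℝ => x ^ k) (μs n))
    (hb : ∀ n, ∫ x, x ^ 8 ∂(μs n) ≤ A * (∫ x, x ^ 2 ∂(μs n)) ^ 4) :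
    ∃ R : ℝ, 0 < R ∧ ∀ᶠ n in atTop, ∫ x, x ^ 2 ∂(μs n) ≤ R := by
  obtain ⟨R, hR⟩ : ∃ R : ℝ, R = 4 * (A + 1) := ⟨_, rfl⟩
  have hRpos : 0 < R := by rw [hR]; positivity
  let f : BoundedContinuousFunction ℝ ℝ := BoundedContinuousFunction.ofNormedAddCommGroup (fun x => min (x ^ 2 / R) 1)
    (by fun_prop) 1 (fun x => by rw [Real.norm_eq_abs, abs_of_nonneg (le_min (by positivity) (by norm_num))]; exact min_le_right _ _)
  have hf0 : ∀ x, 0 ≤ f x := fun x => le_min (by positivity) (by norm_num)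
  have hfN : ∫ x, f x ∂(gaussianReal 0 1) ≤ 1 / R := by
    calc _ ≤ ∫ x, x ^ 2 / R ∂(gaussianReal 0 1) := integral_mono (f.integrable _) 
            ((integrable_pow_gaussianReal 2).div_const R) (fun x => min_le_left _ _)
      _ = _ := by rw [integral_div, gauss_moment2]
  have hlt : ∫ x, f x ∂(gaussianReal 0 1) < 1 / (2 * (A + 1)) := by
    refine hfN.trans_lt ?_
    rw [hR]; apply one_div_lt_one_div_of_lt <;> nlinarith
  have hev := (h f).eventually (gt_mem_nhds hlt)
  refine ⟨3 * R + 1, by positivity, ?_⟩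
  filter_upwards [hev] with n hn
  set a := ∫ x, x ^ 2 ∂(μs n) with ha
  have ha0 : 0 ≤ a := integral_nonneg fun x => sq_nonneg x
  rcases ha0.eq_or_lt with h0 | hpos
  · rw [← h0]; positivity
  set lam : ℝ := 1 / (2 * (A + 1) * a) with hlam
  have hlp : 0 < lam := by positivity
  have hpt : ∀ x : ℝ, x ^ 2 ≤ R + (lam / 2) * ((1 / (2 * a ^ 2)) * x ^ 8 + a ^ 2 / 2) + 1 / (2 * lam) * f x := by
    intro x
    have e1 : x ^ 4 ≤ (1 / (2 * a ^ 2)) * x ^ 8 + a ^ 2 / 2 := by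
      have : (1 / (2 * a ^ 2)) * x ^ 8 + a ^ 2 / 2 - x ^ 4 = (x ^ 4 - a ^ 2) ^ 2 / (2 * a ^ 2) := by
        field_simp; ring
      have h2 : 0 ≤ (x ^ 4 - a ^ 2) ^ 2 / (2 * a ^ 2) := by positivity
      linarith
    have e2 := mul_le_mul_of_nonneg_left e1 (by positivity : 0 ≤ lam / 2)
    rcases le_total (x ^ 2) R with hx | hx
    · have : 0 ≤ 1 / (2 * lam) * f x := mul_nonneg (by positivity) (hf0 x)
      have : 0 ≤ lam / 2 * x ^ 4 := by positivity
      linarith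
    · have : f x = 1 := min_eq_right (by rwa [le_div_iff₀ hRpos, one_mul])
      rw [this, mul_one]
      have : lam / 2 * x ^ 4 + 1 / (2 * lam) - x ^ 2 = (lam * x ^ 2 - 1) ^ 2 / (2 * lam) := by
        field_simp; ring
      have h2 : 0 ≤ (lam * x ^ 2 - 1) ^ 2 / (2 * lam) := by positivity
      linarith
  have hmom : a ≤ R + (lam / 2) * ((1 / (2 * a ^ 2)) * (∫ x, x ^ 8 ∂(μs n)) + a ^ 2 / 2) + 1 / (2 * lam) * ∫ x, f x ∂(μs n) := by
    have i1 : Integrable (fun x : ℝ => (1 / (2 * a ^ 2)) * x ^ 8) (μs n) := (hi n 8).const_mul _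
    have i2 : Integrable (fun x : ℝ => (1 / (2 * a ^ 2)) * x ^ 8 + a ^ 2 / 2) (μs n) := i1.add (integrable_const _)
    have i3 : Integrable (fun x : ℝ => (lam / 2) * ((1 / (2 * a ^ 2)) * x ^ 8 + a ^ 2 / 2)) (μs n) := i2.const_mul _
    have i4 : Integrable (fun x : ℝ => R + (lam / 2) * ((1 / (2 * a ^ 2)) * x ^ 8 + a ^ 2 / 2)) (μs n) := 
      (integrable_const R).add i3
    have i5 : Integrable (fun x : ℝ => 1 / (2 * lam) * f x) (μs n) := (f.integrable _).const_mul _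
    have := integral_mono (hi n 2) (i4.add i5) hpt
    simp only [Pi.add_apply] at this
    rw [integral_add i4 i5, integral_add (integrable_const R) i3, integral_const_mul, integral_add i1 (integrable_const _),
      integral_const_mul, integral_const_mul] at this
    simpa using this
  have h8 := hb n
  rw [← ha] at h8
  have h9 : (1 / (2 * a ^ 2)) * (∫ x, x ^ 8 ∂(μs n)) ≤ A * a ^ 2 / 2 := by
    calc _ ≤ (1 / (2 * a ^ 2)) * (A * a ^ 4) := by gcongr
      _ = _ := by field_simp
  have h10 : (lam / 2) * ((1 / (2 * a ^ 2)) * (∫ x, x ^ 8 ∂(μs n)) + a ^ 2 / 2) ≤ a / 8 := by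
    calc _ ≤ (lam / 2) * (A * a ^ 2 / 2 + a ^ 2 / 2) := by gcongr
      _ = a / 8 := by rw [hlam]; field_simp; ring
  have h11 : 1 / (2 * lam) * ∫ x, f x ∂(μs n) ≤ a / 2 * 1 := by
    calc _ ≤ 1 / (2 * lam) * (1 / (2 * (A + 1))) := by gcongr
      _ = a / 2 * 1 := by rw [hlam]; field_simp
  linarith

lemma moments_converge (μs : ℕ → Measure ℝ) [∀ n, IsProbabilityMeasure (μs n)]
    (h : TendstoInLaw μs (gaussianReal 0 1)) (A : ℝ) (hA : 0 < A) 
    (hi : ∀ n k, Integrable (fun x : ℝ => x ^ k) (μs n))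
    (hb : ∀ n, ∫ x, x ^ 8 ∂(μs n) ≤ A * (∫ x, x ^ 2 ∂(μs n)) ^ 4) :
    Tendsto (fun n => ∫ x, x ^ 2 ∂(μs n)) atTop (𝓝 1) ∧ Tendsto (fun n => ∫ x, x ^ 4 ∂(μs n)) atTop (𝓝 3) := by
  obtain ⟨R, hR, hev⟩ := moment_bdd μs h A hA hi hb
  have h8 : ∀ᶠ n in atTop, ∫ x, x ^ 8 ∂(μs n) ≤ A * R ^ 4 := by
    filter_upwards [hev] with n hn
    refine (hb n).trans ?_
    gcongr
  have h4 : ∀ᶠ n in atTop, ∫ x, x ^ 4 ∂(μs n) ≤ A * R ^ 4 + 1 := by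
    filter_upwards [h8] with n hn
    have : ∫ x, x ^ 4 ∂(μs n) ≤ ∫ x : ℝ, (x ^ 8 + 1) ∂(μs n) := by
      refine integral_mono (hi n 4) ((hi n 8).add (integrable_const 1)) fun x => ?_
      show x ^ 4 ≤ x ^ 8 + 1
      nlinarith [sq_nonneg (x ^ 4 - 1)]
    rw [integral_add (hi n 8) (integrable_const 1)] at this
    simp at this
    linarith
  have e4 : ∀ x : ℝ, (x ^ 2) ^ 2 = x ^ 4 := fun x => by ring
  have e8 : ∀ x : ℝ, (x ^ 4) ^ 2 = x ^ 8 := fun x => by ring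
  have i := integrable_pow_gaussianReal
  constructor
  · have := trunc_lemma μs _ h (fun x => x ^ 2) (by fun_prop) (fun x => by positivity) (max (A * R ^ 4 + 1) 3)
      (fun n => hi n 2) (fun n => by simpa only [e4] using hi n 4) (i 2) (by simpa only [e4] using i 4)
      (by simp only [e4]; filter_upwards [h4] with n hn using hn.trans (le_max_left _ _))
      (by simp only [e4]; rw [gauss_moment4]; exact le_max_right _ _)
    rwa [gauss_moment2] at this
  · have := trunc_lemma μs _ h (fun x => x ^ 4) (by fun_prop) (fun x => by positivity) 
      (max (A * R ^ 4) (∫ x, x ^ 8 ∂(gaussianReal 0 1)))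
      (fun n => hi n 4) (fun n => by simpa only [e8] using hi n 8) (i 4) (by simpa only [e8] using i 8)
      (by simp only [e8]; filter_upwards [h8] with n hn using hn.trans (le_max_left _ _))
      (by simp only [e8]; exact le_max_right _ _)
    rwa [gauss_moment4] at this

end sec4

open MeasureTheory ProbabilityTheory MvPolynomial Filter Topology
set_option linter.unusedSectionVars false
section sec5
variable {κ σ : Type} [Fintype κ] [Fintype σ]

lemma mp_pair {ι X : Type} [Fintype ι] [MeasurableSpace X] (μ : Measure X) [IsProbabilityMeasure μ]
    (T : ι → X × X → X × X) (hT : ∀ i, MeasurePreserving (T i) (μ.prod μ) (μ.prod μ)) :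
    MeasurePreserving (fun z : (ι → X) × (ι → X) =>
      ((fun i => (T i (z.1 i, z.2 i)).1, fun i => (T i (z.1 i, z.2 i)).2) : (ι → X) × (ι → X)))
      ((Measure.pi fun _ => μ).prod (Measure.pi fun _ => μ))
      ((Measure.pi fun _ => μ).prod (Measure.pi fun _ => μ)) := by
  have h1 := measurePreserving_arrowProdEquivProdArrow X X ι (fun _ => μ) (fun _ => μ)
  have h2 := measurePreserving_pi (fun _ : ι => μ.prod μ) (fun _ => μ.prod μ) hT
  exact h1.comp (h2.comp (h1.symm _))

lemma rot_real (θ : ℝ) : MeasurePreserving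
    (fun z : ℝ × ℝ => (Real.cos θ * z.1 + Real.sin θ * z.2, - Real.sin θ * z.1 + Real.cos θ * z.2))
    ((gaussianReal 0 1).prod (gaussianReal 0 1)) ((gaussianReal 0 1).prod (gaussianReal 0 1)) := by
  refine ⟨by fun_prop, ?_⟩
  have := IsGaussian.map_rotation_eq_self (μ := gaussianReal 0 1) (by simp) θ
  exact this

lemma rot_gauss (θ : ℝ) : MeasurePreserving
    (fun z : (σ → ℝ) × (σ → ℝ) => (Real.cos θ • z.1 + Real.sin θ • z.2, - Real.sin θ • z.1 + Real.cos θ • z.2))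
    ((gaussPi σ).prod (gaussPi σ)) ((gaussPi σ).prod (gaussPi σ)) :=
  mp_pair (gaussianReal 0 1) (fun _ : σ => _) (fun _ => rot_real θ)

/-- product of copies of the Gaussian measure -/
noncomputable def gd (d : ℕ) (σ : Type) [Fintype σ] : Measure (Fin d → σ → ℝ) :=
  Measure.pi fun _ => gaussPi σ

instance (d : ℕ) : IsProbabilityMeasure (gd d σ) := by unfold gd; infer_instance

lemma rot_gd (d : ℕ) (θ : ℝ) : MeasurePreserving
    (fun z : (Fin d → σ → ℝ) × (Fin d → σ → ℝ) =>
      (Real.cos θ • z.1 + Real.sin θ • z.2, - Real.sin θ • z.1 + Real.cos θ • z.2))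
    ((gd d σ).prod (gd d σ)) ((gd d σ).prod (gd d σ)) :=
  mp_pair (gaussPi σ) (fun _ : Fin d => _) (fun _ => rot_gauss θ)

lemma swap_gd (d : ℕ) (S : Finset (Fin d)) : MeasurePreserving
    (fun z : (Fin d → σ → ℝ) × (Fin d → σ → ℝ) => (S.piecewise z.1 z.2, S.piecewise z.2 z.1))
    ((gd d σ).prod (gd d σ)) ((gd d σ).prod (gd d σ)) := by
  have := mp_pair (gaussPi σ) (fun i : Fin d => if i ∈ S then id else Prod.swap) (fun i => by
    by_cases h : i ∈ S
    · simp only [h, if_true]; exact MeasurePreserving.id _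
    · simp only [h, if_false]; exact Measure.measurePreserving_swap)
  have e : (fun z : (Fin d → σ → ℝ) × (Fin d → σ → ℝ) => (S.piecewise z.1 z.2, S.piecewise z.2 z.1)) =
    (fun z : (Fin d → σ → ℝ) × (Fin d → σ → ℝ) =>
      ((fun i => ((if i ∈ S then id else Prod.swap) (z.1 i, z.2 i)).1, fun i =>
        ((if i ∈ S then id else Prod.swap) (z.1 i, z.2 i)).2) : (Fin d → σ → ℝ) × (Fin d → σ → ℝ))) := by
    funext z
    ext i j <;> by_cases h : i ∈ S <;> simp [h]
  rw [e]; exact this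

lemma gauss_fourier (u : κ → ℝ) :
    ∫ y, Complex.exp ((∑ j, u j * y j : ℝ) * Complex.I) ∂gaussPi κ = (Real.exp (-(∑ j, u j ^ 2) / 2) : ℝ) := by
  have h1 : ∀ y : κ → ℝ, Complex.exp ((∑ j, u j * y j : ℝ) * Complex.I)
      = ∏ j, Complex.exp (u j * y j * Complex.I) := by
    intro y
    rw [← Complex.exp_sum]; congr 1; push_cast; rw [Finset.sum_mul]
  simp_rw [h1]
  unfold gaussPi
  rw [integral_fintype_prod_eq_prod (fun (j : κ) (y : ℝ) => Complex.exp (u j * y * Complex.I))]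
  have h2 : ∀ j, ∫ y : ℝ, Complex.exp (u j * y * Complex.I) ∂gaussianReal 0 1 = Complex.exp (-(u j)^2/2) := by
    intro j
    have := charFun_gaussianReal (μ := 0) (v := 1) (u j)
    rw [charFun_apply_real] at this
    rw [this]; congr 1; simp; ring
  simp_rw [h2]
  rw [← Complex.exp_sum]; push_cast
  congr 1
  rw [← Finset.sum_neg_distrib, Finset.sum_div]

lemma gauss_int_exp (u : κ → ℝ) :
    Integrable (fun y : κ → ℝ => Complex.exp ((∑ j, u j * y j : ℝ) * Complex.I)) (gaussPi κ) := by
  refine Integrable.of_bound (C := 1) (Continuous.aestronglyMeasurable (by fun_prop)) (ae_of_all _ fun y => ?_)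
  rw [Complex.norm_exp_ofReal_mul_I]

lemma gauss_cos (u : κ → ℝ) :
    ∫ y, Real.cos (∑ j, u j * y j) ∂gaussPi κ = Real.exp (-(∑ j, u j ^ 2) / 2) := by
  have h := congrArg Complex.re (gauss_fourier u)
  rw [Complex.ofReal_re] at h
  rw [← h]
  have := integral_re (𝕜 := ℂ) (gauss_int_exp u)
  simp only [RCLike.re_eq_complex_re, Complex.exp_ofReal_mul_I_re] at this
  exact this

lemma gauss_sin (u : κ → ℝ) :
    ∫ y, Real.sin (∑ j, u j * y j) ∂gaussPi κ = 0 := by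
  have h := congrArg Complex.im (gauss_fourier u)
  rw [Complex.ofReal_im] at h
  rw [← h]
  have := integral_im (𝕜 := ℂ) (gauss_int_exp u)
  simp only [RCLike.im_eq_complex_im, Complex.exp_ofReal_mul_I_im] at this
  exact this

lemma gauss_cos_norm (u : EuclideanSpace ℝ κ) :
    ∫ y, Real.cos (∑ j, u j * y j) ∂gaussPi κ = Real.exp (-‖u‖ ^ 2 / 2) := by
  rw [gauss_cos, EuclideanSpace.real_norm_sq_eq]

lemma int_bdd {X : Type*} [MeasurableSpace X] {μ : Measure X} [IsFiniteMeasure μ] {f : X → ℝ}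
    (hf : Measurable f) (C : ℝ) (hb : ∀ x, |f x| ≤ C) : Integrable f μ :=
  Integrable.of_bound (C := C) hf.aestronglyMeasurable (ae_of_all _ hb)

lemma int_exp {X : Type*} [MeasurableSpace X] {μ : Measure X} [IsFiniteMeasure μ]
    {f : X → EuclideanSpace ℝ κ} (hf : Measurable f) : Integrable (fun x => Real.exp (-‖f x‖ ^ 2 / 2)) μ := by
  refine int_bdd (by fun_prop) 1 fun x => ?_
  rw [abs_of_pos (Real.exp_pos _), Real.exp_le_one_iff]
  have := sq_nonneg ‖f x‖; linarith

/-- van der Corput type inequality -/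
lemma vdc {X : Type*} [MeasurableSpace X] (μ : Measure X) [IsProbabilityMeasure μ]
    (u : X → EuclideanSpace ℝ κ) (hu : Measurable u) :
    (∫ x, Real.exp (-‖u x‖ ^ 2 / 2) ∂μ) ^ 2 ≤
      ∫ z, Real.exp (-‖u z.1 - u z.2‖ ^ 2 / 2) ∂(μ.prod μ) := by
  have hm : ∀ j, Measurable fun x => u x j := fun j => by fun_prop
  have m1 : Measurable fun z : X × (κ → ℝ) => ∑ j, u z.1 j * z.2 j := by
    refine Finset.measurable_sum _ fun j _ => ?_
    exact ((hm j).comp measurable_fst).mul ((measurable_pi_apply j).comp measurable_snd)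
  have b1 : ∀ x, |Real.cos x| ≤ 1 := Real.abs_cos_le_one
  have b2 : ∀ x, |Real.sin x| ≤ 1 := Real.abs_sin_le_one
  set c : (κ → ℝ) → ℝ := fun y => ∫ x, Real.cos (∑ j, u x j * y j) ∂μ with hc
  set s : (κ → ℝ) → ℝ := fun y => ∫ x, Real.sin (∑ j, u x j * y j) ∂μ with hs
  have mc : Measurable c := by
    have h : StronglyMeasurable (Function.uncurry fun (x : X) (y : κ → ℝ) => Real.cos (∑ j, u x j * y j)) :=
      (Real.measurable_cos.comp m1).stronglyMeasurable
    exact (StronglyMeasurable.integral_prod_left h).measurable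
  have ms : Measurable s := by
    have h : StronglyMeasurable (Function.uncurry fun (x : X) (y : κ → ℝ) => Real.sin (∑ j, u x j * y j)) :=
      (Real.measurable_sin.comp m1).stronglyMeasurable
    exact (StronglyMeasurable.integral_prod_left h).measurable
  have bc : ∀ y, |c y| ≤ 1 := fun y => by
    have := norm_integral_le_of_norm_le_const (μ := μ) (C := 1) (f := fun x => Real.cos (∑ j, u x j * y j))
      (ae_of_all _ fun x => b1 _)
    simpa using this
  have bs : ∀ y, |s y| ≤ 1 := fun y => by
    have := norm_integral_le_of_norm_le_const (μ := μ) (C := 1) (f := fun x => Real.sin (∑ j, u x j * y j))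
      (ae_of_all _ fun x => b2 _)
    simpa using this
  have ic : Integrable c (gaussPi κ) := int_bdd mc 1 bc
  have ic2 : Integrable (fun y => c y ^ 2) (gaussPi κ) := int_bdd (mc.pow_const 2) 1 fun y => by
    rw [abs_pow]; exact pow_le_one₀ (abs_nonneg _) (bc y)
  have is2 : Integrable (fun y => s y ^ 2) (gaussPi κ) := int_bdd (ms.pow_const 2) 1 fun y => by
    rw [abs_pow]; exact pow_le_one₀ (abs_nonneg _) (bs y)
  have e1 : ∫ x, Real.exp (-‖u x‖ ^ 2 / 2) ∂μ = ∫ y, c y ∂gaussPi κ := by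
    simp_rw [← gauss_cos_norm]
    rw [integral_integral_swap]
    exact int_bdd (Real.measurable_cos.comp m1) 1 fun z => b1 _
  have m3 : Measurable fun z : (X × X) × (κ → ℝ) => ∑ j, (u z.1.1 - u z.1.2) j * z.2 j := by
    refine Finset.measurable_sum _ fun j _ => ?_
    exact (((hm j).comp (measurable_fst.comp measurable_fst)).sub
      ((hm j).comp (measurable_snd.comp measurable_fst))).mul ((measurable_pi_apply j).comp measurable_snd)
  have e2 : ∫ z, Real.exp (-‖u z.1 - u z.2‖ ^ 2 / 2) ∂(μ.prod μ) = ∫ y, (c y ^ 2 + s y ^ 2) ∂gaussPi κ := by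
    simp_rw [← gauss_cos_norm]
    rw [integral_integral_swap]
    · refine integral_congr_ae (ae_of_all _ fun y => ?_)
      simp only
      have my : Measurable fun x => ∑ j, u x j * y j := m1.comp (measurable_id.prodMk measurable_const)
      have : ∀ z : X × X, Real.cos (∑ j, (u z.1 - u z.2) j * y j) =
          Real.cos (∑ j, u z.1 j * y j) * Real.cos (∑ j, u z.2 j * y j) +
          Real.sin (∑ j, u z.1 j * y j) * Real.sin (∑ j, u z.2 j * y j) := by
        intro z
        rw [← Real.cos_sub, ← Finset.sum_sub_distrib]
        congr 1
        refine Finset.sum_congr rfl fun j _ => ?_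
        simp; ring
      simp_rw [this]
      have iC : Integrable (fun x => Real.cos (∑ j, u x j * y j)) μ :=
        int_bdd (Real.measurable_cos.comp my) 1 fun _ => b1 _
      have iS : Integrable (fun x => Real.sin (∑ j, u x j * y j)) μ :=
        int_bdd (Real.measurable_sin.comp my) 1 fun _ => b2 _
      rw [integral_add (iC.mul_prod iC) (iS.mul_prod iS),
        integral_prod_mul (fun x => Real.cos (∑ j, u x j * y j)) (fun x => Real.cos (∑ j, u x j * y j)),
        integral_prod_mul (fun x => Real.sin (∑ j, u x j * y j)) (fun x => Real.sin (∑ j, u x j * y j))]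
      simp only [hc, hs]; ring
    · exact int_bdd (Real.measurable_cos.comp m3) 1 fun z => b1 _
  rw [e1, e2]
  have v := variance_nonneg c (gaussPi κ)
  rw [variance_eq_sub (by
    exact MemLp.of_bound mc.aestronglyMeasurable 1 (ae_of_all _ bc))] at v
  have h3 : ∫ y, c y ^ 2 ∂gaussPi κ ≤ ∫ y, (c y ^ 2 + s y ^ 2) ∂gaussPi κ :=
    integral_mono ic2 (ic2.add is2) fun y => by simpa using sq_nonneg (s y)
  have h4 : (gaussPi κ)[c ^ 2] = ∫ y, c y ^ 2 ∂gaussPi κ := rfl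
  rw [h4] at v
  linarith

/-- Gaussian shifts decrease -/
lemma gshift (a : σ → EuclideanSpace ℝ κ) (b : EuclideanSpace ℝ κ) :
    ∫ g, Real.exp (-‖(∑ i, g i • a i) + b‖ ^ 2 / 2) ∂gaussPi σ ≤
      ∫ g, Real.exp (-‖∑ i, g i • a i‖ ^ 2 / 2) ∂gaussPi σ := by
  have key : ∀ b : EuclideanSpace ℝ κ, ∫ g, Real.exp (-‖(∑ i, g i • a i) + b‖ ^ 2 / 2) ∂gaussPi σ =
      ∫ y, Real.cos (∑ j, b j * y j) * Real.exp (-(∑ i, (∑ j, a i j * y j)^2) / 2) ∂gaussPi κ := by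
    intro b
    simp_rw [← gauss_cos_norm]
    rw [integral_integral_swap]
    · refine integral_congr_ae (ae_of_all _ fun y => ?_)
      simp only
      rw [← gauss_cos]
      have : ∀ g : σ → ℝ, Real.cos (∑ j, ((∑ i, g i • a i) + b) j * y j) =
          Real.cos (∑ j, b j * y j) * Real.cos (∑ i, (∑ j, a i j * y j) * g i) -
          Real.sin (∑ j, b j * y j) * Real.sin (∑ i, (∑ j, a i j * y j) * g i) := by
        intro g
        rw [← Real.cos_add]; congr 1
        simp only [PiLp.add_apply, WithLp.ofLp_sum, Finset.sum_apply, PiLp.smul_apply, smul_eq_mul, add_mul,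
          Finset.sum_add_distrib]
        rw [add_comm]; congr 1
        simp_rw [Finset.sum_mul]
        rw [Finset.sum_comm]
        refine Finset.sum_congr rfl fun i _ => Finset.sum_congr rfl fun j _ => by ring
      simp_rw [this]
      rw [integral_sub, integral_const_mul, integral_const_mul, gauss_sin]
      · ring
      · exact (int_bdd (by fun_prop) 1 fun _ => Real.abs_cos_le_one _).const_mul _
      · exact (int_bdd (by fun_prop) 1 fun _ => Real.abs_sin_le_one _).const_mul _
    · refine int_bdd (Continuous.measurable ?_) 1 fun z => Real.abs_cos_le_one _
      have hh : Continuous fun z : (σ → ℝ) × (κ → ℝ) =>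
        Real.cos (∑ j, ((∑ i, z.1 i • a i) + b) j * z.2 j) := by fun_prop
      exact hh
  have h0 := key 0
  simp only [add_zero] at h0
  rw [key b, h0]
  have ie : Integrable (fun y : κ → ℝ => Real.exp (-(∑ i, (∑ j, a i j * y j)^2) / 2)) (gaussPi κ) :=
    int_bdd (by fun_prop) 1 fun y => by
      rw [abs_of_pos (Real.exp_pos _), Real.exp_le_one_iff]
      have : 0 ≤ ∑ i, (∑ j, a i j * y j)^2 := Finset.sum_nonneg fun _ _ => sq_nonneg _
      linarith
  refine integral_mono ?_ ?_ fun y => ?_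
  · exact ie.bdd_mul (c := 1) (Continuous.aestronglyMeasurable (by fun_prop))
      (ae_of_all _ fun y => Real.abs_cos_le_one _)
  · simpa using ie
  · simp only [PiLp.zero_apply, zero_mul, Finset.sum_const_zero, Real.cos_zero]
    exact mul_le_mul_of_nonneg_right (Real.cos_le_one _) (Real.exp_pos _).le
end sec5

open MeasureTheory ProbabilityTheory MvPolynomial Filter Topology
set_option linter.unusedSectionVars false
section sec6
variable {κ σ : Type} [Fintype κ] [Fintype σ]

/-- vector valued multilinear forms -/
abbrev ML (d : ℕ) (σ κ : Type) [Fintype σ] [Fintype κ] :=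
  MultilinearMap ℝ (fun _ : Fin d => σ → ℝ) (EuclideanSpace ℝ κ)

lemma ML_cons {d : ℕ} (v : ML (d + 1) σ κ) (h : σ → ℝ) [DecidableEq σ] :
    v.curryLeft h = ∑ i, h i • v.curryLeft (fun j => if i = j then 1 else 0) :=
  LinearMap.pi_apply_eq_sum_univ v.curryLeft h

lemma ML_cont : ∀ {d : ℕ} (v : ML d σ κ), Continuous v := by
  classical
  intro d
  induction d with
  | zero =>
    intro v
    have : (v : (Fin 0 → σ → ℝ) → EuclideanSpace ℝ κ) = fun _ => v 0 := by
      funext w; congr 1; exact Subsingleton.elim _ _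
    rw [this]; exact continuous_const
  | succ d ih =>
    intro v
    have : (v : (Fin (d + 1) → σ → ℝ) → EuclideanSpace ℝ κ) =
        fun w => ∑ i, w 0 i • v.curryLeft (fun j => if i = j then 1 else 0) (fun k : Fin d => w k.succ) := by
      funext w
      have h := ML_cons v (w 0)
      have h2 := congrArg (fun f : ML d σ κ => f (Fin.tail w)) h
      simp only [MultilinearMap.curryLeft_apply, Fin.cons_self_tail, sum_apply,
        smul_apply] at h2
      exact h2
    rw [this]
    refine continuous_finsetSum _ fun i _ => ?_
    have := ih (v.curryLeft (fun j => if i = j then 1 else 0))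
    have h3 : Continuous fun w : Fin (d+1) → σ → ℝ => (fun k : Fin d => w k.succ) := by fun_prop
    have h4 : Continuous fun w : Fin (d+1) → σ → ℝ => w 0 i := by fun_prop
    exact h4.smul (this.comp h3)

lemma mp_cons (d : ℕ) : MeasurePreserving
    (fun z : (σ → ℝ) × (Fin d → σ → ℝ) => (Fin.cons z.1 z.2 : Fin (d + 1) → σ → ℝ))
    ((gaussPi σ).prod (gd d σ)) (gd (d + 1) σ) := by
  have := (measurePreserving_piFinSuccAbove (fun _ : Fin (d + 1) => gaussPi σ) 0).symm
  have e : (fun z : (σ → ℝ) × (Fin d → σ → ℝ) => (Fin.cons z.1 z.2 : Fin (d + 1) → σ → ℝ)) =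
    (MeasurableEquiv.piFinSuccAbove (fun _ : Fin (d + 1) => σ → ℝ) 0).symm := by
    funext z
    simp [MeasurableEquiv.piFinSuccAbove, Fin.insertNthEquiv]
  rw [e]; exact this

lemma gd_succ (d : ℕ) (f : (Fin (d + 1) → σ → ℝ) → ℝ) (hf : Measurable f) (C : ℝ) (hb : ∀ x, |f x| ≤ C) :
    ∫ w, f w ∂gd (d + 1) σ = ∫ h, ∫ w, f (Fin.cons h w) ∂gd d σ ∂gaussPi σ := by
  rw [← (mp_cons d).map_eq, integral_map (mp_cons d).measurable.aemeasurable hf.aestronglyMeasurable,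
    integral_prod]
  exact int_bdd (hf.comp (mp_cons d).measurable) C fun x => hb _

lemma exp_bd (u : EuclideanSpace ℝ κ) : |Real.exp (-‖u‖ ^ 2 / 2)| ≤ 1 := by
  rw [abs_of_pos (Real.exp_pos _), Real.exp_le_one_iff]
  have := sq_nonneg ‖u‖; linarith

/-- Laplace functional -/
noncomputable def Psi {d : ℕ} (v : ML d σ κ) : ℝ := ∫ w, Real.exp (-‖v w‖ ^ 2 / 2) ∂gd d σ

lemma Psi_succ {d : ℕ} (v : ML (d + 1) σ κ) : Psi v = ∫ h, Psi (v.curryLeft h) ∂gaussPi σ := by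
  unfold Psi
  rw [gd_succ d _ (by have := (ML_cont v).measurable; fun_prop) 1 fun x => exp_bd _]
  rfl

lemma Psi_nonneg {d : ℕ} (v : ML d σ κ) : 0 ≤ Psi v := integral_nonneg fun _ => (Real.exp_pos _).le

lemma Psi_le_one {d : ℕ} (v : ML d σ κ) : Psi v ≤ 1 := by
  have : Psi v ≤ ∫ w, (1:ℝ) ∂gd d σ :=
    integral_mono (int_exp (ML_cont v).measurable) (integrable_const _) fun w => (le_abs_self _).trans (exp_bd _)
  simpa using this

/-- leading multilinear part, expressed through finite differences -/
def PT : (d : ℕ) → ((σ → ℝ) → EuclideanSpace ℝ κ) → ML d σ κ → Prop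
  | 0, u, v => ∀ x, u x = v 0
  | d + 1, u, v => ∀ h, PT d (fun z => u (z + h) - u z) (v.curryLeft h)

lemma PT_affine : ∀ (d : ℕ) (u : (σ → ℝ) → EuclideanSpace ℝ κ) (v : ML d σ κ), PT d u v →
    ∀ (a : ℝ) (b : σ → ℝ), PT d (fun z => u (a • z + b)) (a ^ d • v) := by
  intro d
  induction d with
  | zero => intro u v h a b x; simpa using h _
  | succ d ih =>
    intro u v h a b k
    have := ih _ _ (h (a • k)) a b
    convert this using 1
    · funext z
      have : a • (z + k) + b = a • z + b + a • k := by rw [smul_add]; abel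
      simp only [this]
    · rw [map_smul, smul_smul, ← pow_succ]
      ext1 w
      simp [MultilinearMap.curryLeft_apply]

lemma jensen_pow {X : Type*} [MeasurableSpace X] {μ : Measure X} [IsProbabilityMeasure μ] {f : X → ℝ}
    (hf : Measurable f) (h0 : ∀ x, 0 ≤ f x) (h1 : ∀ x, f x ≤ 1) (n : ℕ) :
    (∫ x, f x ∂μ) ^ n ≤ ∫ x, f x ^ n ∂μ := by
  refine (convexOn_pow n).map_integral_le (by fun_prop) isClosed_Ici (ae_of_all _ h0)
    (int_bdd hf 1 fun x => by rw [abs_of_nonneg (h0 x)]; exact h1 x) ?_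
  exact int_bdd (hf.pow_const n) 1 fun x => by
    simp only [Function.comp, abs_pow, abs_of_nonneg (h0 x)]; exact pow_le_one₀ (h0 x) (h1 x)

theorem partA (d : ℕ) : ∃ c : ℝ, 0 < c ∧ ∀ (σ κ : Type) [Fintype σ] [Fintype κ]
    (u : (σ → ℝ) → EuclideanSpace ℝ κ) (v : ML d σ κ), Continuous u → PT d u v →
    (∫ x, Real.exp (-‖u x‖ ^ 2 / 2) ∂gaussPi σ) ^ (2 ^ d) ≤ Psi (c • v) := by
  induction d with
  | zero =>
    refine ⟨1, one_pos, fun σ κ _ _ u v hu h => ?_⟩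
    have h' : ∀ x, u x = v 0 := h
    have e : ∀ w : Fin 0 → σ → ℝ, v w = v 0 := fun w => congrArg v (Subsingleton.elim _ _)
    simp only [Psi, one_smul, h', e]
    simp
  | succ d ih =>
    obtain ⟨c, hc, ih⟩ := ih
    set a : ℝ := √2 / 2 with ha
    have ha0 : 0 < a := by positivity
    refine ⟨c * (a ^ d * (2 * a)), by positivity, fun σ κ _ _ u v hu h => ?_⟩
    set U : (σ → ℝ) → (σ → ℝ) → EuclideanSpace ℝ κ :=
      fun y z => u (a • z + -(a • y) + (2 * a) • y) - u (a • z + -(a • y)) with hU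
    have hPT : ∀ y, PT d (U y) (a ^ d • v.curryLeft ((2 * a) • y)) := fun y =>
      PT_affine d _ _ (h ((2 * a) • y)) a (-(a • y))
    have hUc : Continuous fun z : (σ → ℝ) × (σ → ℝ) => U z.1 z.2 := by
      simp only [hU]; fun_prop
    have hUc1 : ∀ y, Continuous (U y) := fun y => by simp only [hU]; fun_prop
    set f : (σ → ℝ) → ℝ := fun y => ∫ z, Real.exp (-‖U y z‖ ^ 2 / 2) ∂gaussPi σ with hf
    have e1 : ∫ z, Real.exp (-‖u z.1 - u z.2‖ ^ 2 / 2) ∂((gaussPi σ).prod (gaussPi σ)) =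
        ∫ y, f y ∂gaussPi σ := by
      have hr := rot_gauss (σ := σ) (Real.pi / 4)
      conv_lhs => rw [← hr.map_eq]
      rw [integral_map hr.measurable.aemeasurable (Continuous.aestronglyMeasurable (by fun_prop)),
        integral_prod _ (int_exp (Continuous.measurable (by fun_prop)))]
      refine integral_congr_ae (ae_of_all _ fun y => integral_congr_ae (ae_of_all _ fun z => ?_))
      simp only [hU, Real.cos_pi_div_four, Real.sin_pi_div_four, ← ha]
      have i1 : a • y + a • z = a • z + -(a • y) + (2 * a) • y := by
        rw [two_mul, add_smul]; abel
      have i2 : -a • y + a • z = a • z + -(a • y) := by rw [neg_smul]; abel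
      rw [i1, i2]
    have mf : Measurable f := by
      have h : StronglyMeasurable (Function.uncurry fun (y z : σ → ℝ) => Real.exp (-‖U y z‖ ^ 2 / 2)) :=
        (Measurable.stronglyMeasurable (by
          have := hUc.measurable
          exact (Real.measurable_exp.comp (((this.norm.pow_const 2).neg).div_const 2))))
      exact (StronglyMeasurable.integral_prod_right h).measurable
    have f0 : ∀ y, 0 ≤ f y := fun y => integral_nonneg fun _ => (Real.exp_pos _).le
    have f1 : ∀ y, f y ≤ 1 := fun y => by
      have : f y ≤ ∫ w, (1:ℝ) ∂gaussPi σ :=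
        integral_mono (int_exp (hUc1 y).measurable) (integrable_const _) fun w => (le_abs_self _).trans (exp_bd _)
      simpa using this
    have hstep : ∀ y, f y ^ (2 ^ d) ≤ Psi (((c * (a ^ d * (2 * a))) • v).curryLeft y) := fun y => by
      have := ih σ κ (U y) _ (hUc1 y) (hPT y)
      refine this.trans_eq ?_
      congr 1
      ext1 w
      simp only [smul_apply, MultilinearMap.curryLeft_apply, map_smul, smul_smul]
    have hv := vdc (gaussPi σ) u hu.measurable
    rw [e1] at hv
    calc (∫ x, Real.exp (-‖u x‖ ^ 2 / 2) ∂gaussPi σ) ^ (2 ^ (d + 1))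
        = ((∫ x, Real.exp (-‖u x‖ ^ 2 / 2) ∂gaussPi σ) ^ 2) ^ (2 ^ d) := by rw [← pow_mul]; congr 1; ring
      _ ≤ (∫ y, f y ∂gaussPi σ) ^ (2 ^ d) := pow_le_pow_left₀ (sq_nonneg _) hv _
      _ ≤ ∫ y, f y ^ (2 ^ d) ∂gaussPi σ := jensen_pow mf f0 f1 _
      _ ≤ ∫ y, Psi (((c * (a ^ d * (2 * a))) • v).curryLeft y) ∂gaussPi σ := by
          refine integral_mono (int_bdd (mf.pow_const _) 1 fun x => ?_) ?_ hstep
          · rw [abs_pow, abs_of_nonneg (f0 x)]; exact pow_le_one₀ (f0 x) (f1 x)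
          · refine int_bdd ?_ 1 fun x => by rw [abs_of_nonneg (Psi_nonneg _)]; exact Psi_le_one _
            have hm := ((ML_cont ((c * (a ^ d * (2 * a))) • v)).measurable.comp (mp_cons (σ := σ) d).measurable)
            have h : StronglyMeasurable (Function.uncurry fun (y : σ → ℝ) (w : Fin d → σ → ℝ) =>
                Real.exp (-‖((c * (a ^ d * (2 * a))) • v) (Fin.cons y w)‖ ^ 2 / 2)) :=
              (Measurable.stronglyMeasurable (by
                exact (Real.measurable_exp.comp (((hm.norm.pow_const 2).neg).div_const 2))))
            exact (StronglyMeasurable.integral_prod_right (ν := gd d σ) h).measurable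
      _ = Psi _ := (Psi_succ _).symm
end sec6

open MeasureTheory ProbabilityTheory MvPolynomial Filter Topology
set_option linter.unusedSectionVars false
section sec7
variable {κ σ : Type} [Fintype κ] [Fintype σ]

lemma gshift_lin (A : (σ → ℝ) →ₗ[ℝ] EuclideanSpace ℝ κ) (c : ℝ) (b : σ → ℝ) :
    ∫ g, Real.exp (-‖A (b + c • g)‖ ^ 2 / 2) ∂gaussPi σ ≤
      ∫ g, Real.exp (-‖A (c • g)‖ ^ 2 / 2) ∂gaussPi σ := by
  classical
  have h := gshift (fun i => c • A (fun j => if i = j then 1 else 0)) (A b)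
  have e : ∀ g : σ → ℝ, ∑ i, g i • c • A (fun j => if i = j then 1 else 0) = A (c • g) := by
    intro g
    rw [map_smul, LinearMap.pi_apply_eq_sum_univ A g, Finset.smul_sum]
    exact Finset.sum_congr rfl fun i _ => smul_comm _ _ _
  simp_rw [e, ← map_add] at h
  simpa only [add_comm b] using h

lemma B1 : ∀ (d : ℕ) (v : ML d σ κ) (b : Fin d → σ → ℝ) (c : Fin d → ℝ),
    ∫ w, Real.exp (-‖v (fun k => b k + c k • w k)‖ ^ 2 / 2) ∂gd d σ ≤ Psi ((∏ k, c k) • v) := by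
  intro d
  induction d with
  | zero =>
    intro v b c
    have e : ∀ w : Fin 0 → σ → ℝ, v w = v 0 := fun w => congrArg v (Subsingleton.elim _ _)
    simp [Psi, e]
  | succ d ih =>
    intro v b c
    have mexp : ∀ {X : Type} [TopologicalSpace X] [MeasurableSpace X] [OpensMeasurableSpace X] {f : X → EuclideanSpace ℝ κ}, Continuous f →
        Measurable fun x => Real.exp (-‖f x‖ ^ 2 / 2) := fun hf => by fun_prop
    have hv := ML_cont v
    have hvm : Continuous fun w : Fin (d+1) → σ → ℝ => v (fun k => b k + c k • w k) :=
      hv.comp (by fun_prop)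
    rw [gd_succ d _ (mexp hvm) 1 fun x => exp_bd _]
    set P := ∏ k : Fin d, c k.succ with hP
    have key : Continuous fun z : (σ → ℝ) × (Fin d → σ → ℝ) => (P • v) (Fin.cons (b 0 + c 0 • z.1) z.2) := by
      refine (ML_cont (P • v)).comp ?_
      refine continuous_pi fun k => ?_
      refine Fin.cases ?_ (fun k => ?_) k
      · simp only [Fin.cons_zero]; fun_prop
      · simp only [Fin.cons_succ]; fun_prop
    have key2 : Continuous fun z : (σ → ℝ) × (Fin d → σ → ℝ) => (P • v) (Fin.cons (c 0 • z.1) z.2) := by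
      refine (ML_cont (P • v)).comp ?_
      refine continuous_pi fun k => ?_
      refine Fin.cases ?_ (fun k => ?_) k
      · simp only [Fin.cons_zero]; fun_prop
      · simp only [Fin.cons_succ]; fun_prop
    have sm : StronglyMeasurable (Function.uncurry fun (h : σ → ℝ) (w : Fin d → σ → ℝ) =>
        Real.exp (-‖(P • v) (Fin.cons (b 0 + c 0 • h) w)‖ ^ 2 / 2)) := (mexp key).stronglyMeasurable
    have sm2 : StronglyMeasurable (Function.uncurry fun (h : σ → ℝ) (w : Fin d → σ → ℝ) =>
        Real.exp (-‖(P • v) (Fin.cons (c 0 • h) w)‖ ^ 2 / 2)) := (mexp key2).stronglyMeasurable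
    have sm3 : StronglyMeasurable (Function.uncurry fun (h : σ → ℝ) (w : Fin d → σ → ℝ) =>
        Real.exp (-‖v (fun k => b k + c k • (Fin.cons h w : Fin (d+1) → σ → ℝ) k)‖ ^ 2 / 2)) :=
      ((mexp hvm).comp (mp_cons d).measurable).stronglyMeasurable
    have bd : ∀ {X : Type} [MeasurableSpace X] (μ : Measure X) [IsProbabilityMeasure μ] (f : X → EuclideanSpace ℝ κ),
        |∫ x, Real.exp (-‖f x‖ ^ 2 / 2) ∂μ| ≤ 1 := fun μ _ f => by
      have := norm_integral_le_of_norm_le_const (μ := μ) (C := 1) (f := fun x => Real.exp (-‖f x‖ ^ 2 / 2))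
        (ae_of_all _ fun x => exp_bd _)
      simpa using this
    calc ∫ h, ∫ w, Real.exp (-‖v (fun k => b k + c k • (Fin.cons h w : Fin (d+1) → σ → ℝ) k)‖ ^ 2 / 2) ∂gd d σ ∂gaussPi σ
        ≤ ∫ h, ∫ w, Real.exp (-‖(P • v) (Fin.cons (b 0 + c 0 • h) w)‖ ^ 2 / 2) ∂gd d σ ∂gaussPi σ := by
          refine integral_mono (int_bdd (StronglyMeasurable.integral_prod_right sm3).measurable 1 fun h => bd _ _)
            (int_bdd (StronglyMeasurable.integral_prod_right sm).measurable 1 fun h => bd _ _) fun h => ?_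
          have := ih (v.curryLeft (b 0 + c 0 • h)) (fun k => b k.succ) (fun k => c k.succ)
          refine le_trans (le_of_eq ?_) this
          refine integral_congr_ae (ae_of_all _ fun w => ?_)
          simp only [MultilinearMap.curryLeft_apply]
          congr 5
          refine congrArg v ?_
          funext k
          refine Fin.cases ?_ (fun k => ?_) k <;> simp
      _ = ∫ w, ∫ h, Real.exp (-‖(P • v) (Fin.cons (b 0 + c 0 • h) w)‖ ^ 2 / 2) ∂gaussPi σ ∂gd d σ := by
          rw [integral_integral_swap]
          exact int_bdd sm.measurable 1 fun x => exp_bd _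
      _ ≤ ∫ w, ∫ h, Real.exp (-‖(P • v) (Fin.cons (c 0 • h) w)‖ ^ 2 / 2) ∂gaussPi σ ∂gd d σ := by
          refine integral_mono (int_bdd (StronglyMeasurable.integral_prod_left sm).measurable 1 fun h => bd _ _)
            (int_bdd (StronglyMeasurable.integral_prod_left sm2).measurable 1 fun h => bd _ _) fun w => ?_
          exact gshift_lin ({ toFun := fun h => (P • v).curryLeft h w, map_add' := by intro x y; rw [map_add]; rfl, map_smul' := by intro x y; rw [map_smul]; rfl }) (c 0) (b 0)
      _ = ∫ h, ∫ w, Real.exp (-‖(P • v) (Fin.cons (c 0 • h) w)‖ ^ 2 / 2) ∂gd d σ ∂gaussPi σ := by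
          rw [eq_comm, integral_integral_swap]
          exact int_bdd sm2.measurable 1 fun x => exp_bd _
      _ = Psi ((∏ k, c k) • v) := by
          rw [Psi_succ]
          unfold Psi
          refine integral_congr_ae (ae_of_all _ fun h => integral_congr_ae (ae_of_all _ fun w => ?_))
          have : (P • v) (Fin.cons (c 0 • h) w) = (((∏ k, c k) • v).curryLeft h) w := by
            have h1 : ((P • v).curryLeft (c 0 • h)) w = (((∏ k, c k) • v).curryLeft h) w := by
              rw [map_smul]
              simp only [smul_apply, MultilinearMap.curryLeft_apply, smul_smul]
              rw [Fin.prod_univ_succ]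
            exact h1
          simp only [this]

lemma Psi_anti {d : ℕ} (v : ML d σ κ) {s t : ℝ} (h : |s| ≤ |t|) : Psi (t • v) ≤ Psi (s • v) := by
  refine integral_mono (int_exp (ML_cont _).measurable) (int_exp (ML_cont _).measurable) fun w => ?_
  simp only [smul_apply, norm_smul, Real.norm_eq_abs]
  apply Real.exp_le_exp.mpr
  have : (|s| * ‖v w‖) ^ 2 ≤ (|t| * ‖v w‖) ^ 2 := by gcongr
  linarith

lemma lower {d : ℕ} (v : ML d σ κ) (M α δ : ℝ) (hM : 0 < M) (hα : 0 < α) (hα1 : α ≤ 1) (hδ : 0 < δ) (hδ1 : δ ≤ 1)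
    (hs : 1 / 8 ≤ α ^ d / 2 - 2 * 2 ^ d * δ) (x y : Fin d → σ → ℝ)
    (hg : ∀ S : Finset (Fin d), M / 2 ≤ ‖v (S.piecewise x y)‖ ∧ ‖v (S.piecewise x y)‖ ≤ 2 * M) :
    M / 8 ≤ ‖v (α • x + δ • y)‖ := by
  have e : ∀ S : Finset (Fin d), v (S.piecewise (α • x) (δ • y)) =
      (∏ k, if k ∈ S then α else δ) • v (S.piecewise x y) := by
    intro S
    rw [← MultilinearMap.map_smul_univ]
    congr 1
    funext k
    by_cases h : k ∈ S <;> simp [h]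
  rw [MultilinearMap.map_add_univ]
  simp_rw [e]
  rw [← Finset.add_sum_erase _ _ (Finset.mem_univ (Finset.univ : Finset (Fin d)))]
  have h1 : ‖∑ S ∈ Finset.univ.erase (Finset.univ : Finset (Fin d)),
      (∏ k, if k ∈ S then α else δ) • v (S.piecewise x y)‖ ≤ 2 ^ d * (δ * (2 * M)) := by
    refine (norm_sum_le _ _).trans ?_
    refine (Finset.sum_le_card_nsmul _ _ (δ * (2 * M)) ?_).trans ?_
    · intro S hS
      rw [norm_smul]
      refine mul_le_mul ?_ (hg S).2 (norm_nonneg _) hδ.le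
      have : ∃ k, k ∉ S := by
        by_contra hc; push Not at hc
        exact (Finset.mem_erase.mp hS).1 (Finset.eq_univ_iff_forall.mpr hc)
      obtain ⟨k, hk⟩ := this
      rw [Real.norm_of_nonneg (Finset.prod_nonneg fun i _ => by split_ifs <;> positivity)]
      rw [← Finset.mul_prod_erase _ _ (Finset.mem_univ k), if_neg hk]
      refine mul_le_of_le_one_right hδ.le (Finset.prod_le_one ?_ ?_)
      · intro i _; split_ifs <;> positivity
      · intro i _; split_ifs <;> assumption
    · rw [nsmul_eq_mul]
      refine mul_le_mul_of_nonneg_right ?_ (by positivity)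
      have := Finset.card_le_univ (Finset.univ.erase (Finset.univ : Finset (Fin d)))
      simp only [Fintype.card_finset, Fintype.card_fin] at this
      exact_mod_cast this
  have h2 : α ^ d * (M / 2) ≤ ‖(∏ k, if k ∈ (Finset.univ : Finset (Fin d)) then α else δ) • v ((Finset.univ : Finset (Fin d)).piecewise x y)‖ := by
    rw [norm_smul]
    simp only [Finset.mem_univ, if_true, Finset.prod_const, Finset.card_univ, Fintype.card_fin]
    rw [Real.norm_of_nonneg (by positivity)]
    exact mul_le_mul_of_nonneg_left (hg Finset.univ).1 (by positivity)
  have h3 := norm_sub_le_norm_add ((∏ k, if k ∈ (Finset.univ : Finset (Fin d)) then α else δ) • v ((Finset.univ : Finset (Fin d)).piecewise x y))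
    (∑ S ∈ Finset.univ.erase (Finset.univ : Finset (Fin d)),
      (∏ k, if k ∈ S then α else δ) • v (S.piecewise x y))
  have h4 : M / 8 ≤ α ^ d * (M / 2) - 2 ^ d * (δ * (2 * M)) := by nlinarith
  linarith
end sec7

open MeasureTheory ProbabilityTheory MvPolynomial Filter Topology
set_option linter.unusedSectionVars false
section sec8
variable {κ σ : Type} [Fintype κ] [Fintype σ]

/-- bad set -/
def bad {d : ℕ} (v : ML d σ κ) (M : ℝ) : Set (Fin d → σ → ℝ) := {w | ¬ (M / 2 ≤ ‖v w‖ ∧ ‖v w‖ ≤ 2 * M)}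

lemma meas_bad {d : ℕ} (v : ML d σ κ) (M : ℝ) : MeasurableSet (bad v M) := by
  have h := (ML_cont v).norm.measurable
  exact ((measurableSet_le measurable_const h).inter (measurableSet_le h measurable_const)).compl

lemma meas_exp {X : Type} [TopologicalSpace X] [MeasurableSpace X] [OpensMeasurableSpace X] {f : X → EuclideanSpace ℝ κ}
    (hf : Continuous f) : Measurable fun x => Real.exp (-‖f x‖ ^ 2 / 2) := by fun_prop

lemma B2_term {d : ℕ} (v : ML d σ κ) (M α δ t : ℝ) (hα : 0 < α) (hα1 : α ≤ 1) (hδ : 0 < δ) (hδ1 : δ ≤ 1)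
    (S : Finset (Fin d)) :
    ∫ z, (bad v M).indicator (fun _ => (1:ℝ)) (S.piecewise z.1 z.2) *
      Real.exp (-‖(t • v) (α • z.1 + δ • z.2)‖ ^ 2 / 2) ∂((gd d σ).prod (gd d σ)) ≤
    (gd d σ).real (bad v M) * Psi ((t * (α * δ) ^ d) • v) := by
  set c : Fin d → ℝ := fun k => if k ∈ S then δ else α with hc
  set c' : Fin d → ℝ := fun k => if k ∈ S then α else δ with hc'
  have mind : Measurable ((bad v M).indicator (fun _ => (1:ℝ))) := measurable_const.indicator (meas_bad v M)
  have bind : ∀ x, |(bad v M).indicator (fun _ => (1:ℝ)) x| ≤ 1 := fun x => by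
    by_cases h : x ∈ bad v M <;> simp [h]
  have hk : Continuous fun z : (Fin d → σ → ℝ) × (Fin d → σ → ℝ) => (t • v) (fun k => c' k • z.1 k + c k • z.2 k) :=
    (ML_cont _).comp (by fun_prop)
  have hi : ∀ a : EuclideanSpace ℝ κ, ∀ x, |(bad v M).indicator (fun _ => (1:ℝ)) x * Real.exp (-‖a‖ ^ 2 / 2)| ≤ 1 := by
    intro a x; rw [abs_mul]; exact mul_le_one₀ (bind _) (abs_nonneg _) (exp_bd _)
  have hi2 : Integrable (fun z : (Fin d → σ → ℝ) × (Fin d → σ → ℝ) => (bad v M).indicator (fun _ => (1:ℝ)) z.1 *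
      Real.exp (-‖(t • v) (fun k => c' k • z.1 k + c k • z.2 k)‖ ^ 2 / 2)) ((gd d σ).prod (gd d σ)) :=
    int_bdd ((mind.comp measurable_fst).mul (meas_exp hk)) 1 fun x => hi _ _
  have e : ∫ z, (bad v M).indicator (fun _ => (1:ℝ)) (S.piecewise z.1 z.2) *
      Real.exp (-‖(t • v) (α • z.1 + δ • z.2)‖ ^ 2 / 2) ∂((gd d σ).prod (gd d σ)) =
      ∫ z, (bad v M).indicator (fun _ => (1:ℝ)) z.1 *
      Real.exp (-‖(t • v) (fun k => c' k • z.1 k + c k • z.2 k)‖ ^ 2 / 2) ∂((gd d σ).prod (gd d σ)) := by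
    have hr := swap_gd (σ := σ) d S
    conv_rhs => rw [← hr.map_eq]
    rw [integral_map hr.measurable.aemeasurable (by
      exact ((mind.comp measurable_fst).mul (meas_exp hk)).aestronglyMeasurable)]
    refine integral_congr_ae (ae_of_all _ fun z => ?_)
    simp only
    congr 6
    refine congrArg _ ?_
    funext k
    by_cases h : k ∈ S
    · simp [h, hc, hc']
    · simp [h, hc, hc', add_comm]
  rw [e, integral_prod _ hi2]
  have hp : (α * δ) ^ d ≤ ∏ k, c k := by
    have : (α * δ) ^ d = ∏ _k : Fin d, (α * δ) := by simp
    rw [this]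
    refine Finset.prod_le_prod (fun k _ => by positivity) fun k _ => ?_
    simp only [hc]; split_ifs
    · exact mul_le_of_le_one_left hδ.le hα1
    · exact mul_le_of_le_one_right hα.le hδ1
  have hx : ∀ x : Fin d → σ → ℝ, ∫ y, (bad v M).indicator (fun _ => (1:ℝ)) x *
      Real.exp (-‖(t • v) (fun k => c' k • x k + c k • y k)‖ ^ 2 / 2) ∂gd d σ ≤
      (bad v M).indicator (fun _ => (1:ℝ)) x * Psi ((t * (α * δ) ^ d) • v) := by
    intro x
    rw [integral_const_mul]
    refine mul_le_mul_of_nonneg_left ?_ (Set.indicator_nonneg (fun _ _ => zero_le_one) _)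
    refine (B1 d (t • v) (fun k => c' k • x k) c).trans ?_
    rw [smul_smul]
    refine Psi_anti v ?_
    rw [abs_mul, abs_mul, mul_comm]
    refine mul_le_mul_of_nonneg_right ?_ (abs_nonneg _)
    rw [abs_of_nonneg (by positivity)]
    exact hp.trans (le_abs_self _)
  calc _ ≤ ∫ x, (bad v M).indicator (fun _ => (1:ℝ)) x * Psi ((t * (α * δ) ^ d) • v) ∂gd d σ := by
        refine integral_mono hi2.integral_prod_left ?_ hx
        exact (int_bdd mind 1 bind).mul_const _
    _ = _ := by
        rw [integral_mul_const, integral_indicator (meas_bad v M)]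
        simp

lemma B2 {d : ℕ} (v : ML d σ κ) (M θ t : ℝ) (hM : 0 < M) (hα : 0 < Real.cos θ) (hδ : 0 < Real.sin θ)
    (hs : 1 / 8 ≤ Real.cos θ ^ d / 2 - 2 * 2 ^ d * Real.sin θ) :
    Psi (t • v) ≤ Real.exp (-(t * (M / 8)) ^ 2 / 2) +
      2 ^ d * (gd d σ).real (bad v M) * Psi ((t * (Real.cos θ * Real.sin θ) ^ d) • v) := by
  set α := Real.cos θ with hαd
  set δ := Real.sin θ with hδd
  have hα1 : α ≤ 1 := Real.cos_le_one _
  have hδ1 : δ ≤ 1 := Real.sin_le_one _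
  have mind : Measurable ((bad v M).indicator (fun _ => (1:ℝ))) := measurable_const.indicator (meas_bad v M)
  have bind : ∀ x, |(bad v M).indicator (fun _ => (1:ℝ)) x| ≤ 1 := fun x => by
    by_cases h : x ∈ bad v M <;> simp [h]
  have hk : Continuous fun z : (Fin d → σ → ℝ) × (Fin d → σ → ℝ) => (t • v) (α • z.1 + δ • z.2) :=
    (ML_cont _).comp (by fun_prop)
  have e : Psi (t • v) = ∫ z, Real.exp (-‖(t • v) (α • z.1 + δ • z.2)‖ ^ 2 / 2) ∂((gd d σ).prod (gd d σ)) := by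
    have hr := (measurePreserving_fst (μ := gd d σ) (ν := gd d σ)).comp (rot_gd (σ := σ) d θ)
    unfold Psi
    conv_lhs => rw [← hr.map_eq]
    rw [integral_map hr.measurable.aemeasurable (meas_exp (ML_cont _)).aestronglyMeasurable]
    rfl
  have iterm : ∀ S : Finset (Fin d), Integrable (fun z : (Fin d → σ → ℝ) × (Fin d → σ → ℝ) =>
      (bad v M).indicator (fun _ => (1:ℝ)) (S.piecewise z.1 z.2) *
      Real.exp (-‖(t • v) (α • z.1 + δ • z.2)‖ ^ 2 / 2)) ((gd d σ).prod (gd d σ)) := fun S => by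
    refine int_bdd ((mind.comp (measurable_fst.comp (swap_gd d S).measurable)).mul (meas_exp hk)) 1 fun z => ?_
    rw [abs_mul]; exact mul_le_one₀ (bind _) (abs_nonneg _) (exp_bd _)
  rw [e]
  calc ∫ z, Real.exp (-‖(t • v) (α • z.1 + δ • z.2)‖ ^ 2 / 2) ∂((gd d σ).prod (gd d σ))
      ≤ ∫ z, (Real.exp (-(t * (M / 8)) ^ 2 / 2) + ∑ S : Finset (Fin d), (bad v M).indicator (fun _ => (1:ℝ)) (S.piecewise z.1 z.2) *
      Real.exp (-‖(t • v) (α • z.1 + δ • z.2)‖ ^ 2 / 2)) ∂((gd d σ).prod (gd d σ)) := by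
        refine integral_mono (int_exp hk.measurable)
          ((integrable_const _).add (integrable_finsetSum _ fun S _ => iterm S)) fun z => ?_
        by_cases hz : ∀ S : Finset (Fin d), S.piecewise z.1 z.2 ∉ bad v M
        · have := lower v M α δ hM hα hα1 hδ hδ1 hs z.1 z.2 (fun S => not_not.mp (hz S))
          have h2 : Real.exp (-‖(t • v) (α • z.1 + δ • z.2)‖ ^ 2 / 2) ≤ Real.exp (-(t * (M / 8)) ^ 2 / 2) := by
            apply Real.exp_le_exp.mpr
            rw [smul_apply, norm_smul, mul_pow, mul_pow, Real.norm_eq_abs, sq_abs]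
            have h3 : (M/8)^2 ≤ ‖v (α • z.1 + δ • z.2)‖ ^ 2 := by gcongr
            have := mul_le_mul_of_nonneg_left h3 (sq_nonneg t)
            linarith
          refine h2.trans (le_add_of_nonneg_right (Finset.sum_nonneg fun S _ => ?_))
          exact mul_nonneg (Set.indicator_nonneg (fun _ _ => zero_le_one) _) (Real.exp_pos _).le
        · push Not at hz
          obtain ⟨S, hS⟩ := hz
          have h1 : Real.exp (-‖(t • v) (α • z.1 + δ • z.2)‖ ^ 2 / 2) =
              (bad v M).indicator (fun _ => (1:ℝ)) (S.piecewise z.1 z.2) *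
              Real.exp (-‖(t • v) (α • z.1 + δ • z.2)‖ ^ 2 / 2) := by
            rw [Set.indicator_of_mem hS, one_mul]
          have h2 := Finset.single_le_sum (f := fun S : Finset (Fin d) => (bad v M).indicator (fun _ => (1:ℝ)) (S.piecewise z.1 z.2) *
              Real.exp (-‖(t • v) (α • z.1 + δ • z.2)‖ ^ 2 / 2)) (fun S _ =>
                mul_nonneg (Set.indicator_nonneg (fun _ _ => zero_le_one) _) (Real.exp_pos _).le) (Finset.mem_univ S)
          rw [← h1] at h2
          have h3 := (Real.exp_pos (-(t * (M / 8)) ^ 2 / 2)).le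
          linarith
    _ = Real.exp (-(t * (M / 8)) ^ 2 / 2) + ∑ S : Finset (Fin d), ∫ z, (bad v M).indicator (fun _ => (1:ℝ)) (S.piecewise z.1 z.2) *
      Real.exp (-‖(t • v) (α • z.1 + δ • z.2)‖ ^ 2 / 2) ∂((gd d σ).prod (gd d σ)) := by
        rw [integral_add (integrable_const _) (integrable_finsetSum _ fun S _ => iterm S),
          integral_finsetSum _ fun S _ => iterm S]
        simp
    _ ≤ Real.exp (-(t * (M / 8)) ^ 2 / 2) + ∑ S : Finset (Fin d), (gd d σ).real (bad v M) * Psi ((t * (α * δ) ^ d) • v) := by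
        gcongr with S
        exact B2_term v M α δ t hα hα1 hδ hδ1 S
    _ = _ := by
        simp [mul_assoc]

lemma exists_angle (d : ℕ) : ∃ θ : ℝ, 0 < Real.cos θ ∧ 0 < Real.sin θ ∧
    1 / 8 ≤ Real.cos θ ^ d / 2 - 2 * 2 ^ d * Real.sin θ := by
  have h1 : ∀ᶠ θ in 𝓝 (0:ℝ), 0 < Real.cos θ := by
    apply (Real.continuous_cos.tendsto 0).eventually_const_lt; simp
  have h2 : ∀ᶠ θ in 𝓝 (0:ℝ), 1 / 8 < Real.cos θ ^ d / 2 - 2 * 2 ^ d * Real.sin θ := by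
    have hc : Continuous fun θ => Real.cos θ ^ d / 2 - 2 * 2 ^ d * Real.sin θ := by fun_prop
    apply (hc.tendsto 0).eventually_const_lt; simp; norm_num
  have h3 : ∀ᶠ θ in 𝓝[>] (0:ℝ), 0 < Real.sin θ := by
    filter_upwards [Ioo_mem_nhdsGT Real.pi_pos] with θ h
    exact Real.sin_pos_of_pos_of_lt_pi h.1 h.2
  obtain ⟨θ, ha, hb, hc⟩ := (h3.and ((h1.and h2).filter_mono nhdsWithin_le_nhds)).exists
  exact ⟨θ, hb, ha, hc.le⟩

/-- bootstrapping of the recursive inequality -/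
lemma bootstrap (f : ℝ → ℝ) (hf : ∀ t, f t ≤ 1) (hf0 : ∀ t, 0 ≤ f t) (η : ℝ) (h0 : 0 < η) (h1 : η < 1) (r : ℕ) (K : ℝ) (hK : 0 ≤ K)
    (h : ∀ t, 0 < t → t ^ r * f t ≤ K + (η ^ r / 2) * t ^ r * f (t * η)) :
    ∀ t, 0 < t → t ^ r * f t ≤ 2 * K + 1 := by
  have key : ∀ n : ℕ, ∀ t, 0 < t → t * η ^ n ≤ 1 → t ^ r * f t ≤ 2 * K + 1 := by
    intro n
    induction n with
    | zero =>
      intro t ht h1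
      have : t ^ r * f t ≤ 1 := mul_le_one₀ (pow_le_one₀ ht.le (by simpa using h1)) (hf0 _) (hf _)
      linarith
    | succ n ih =>
      intro t ht h2
      have := ih (t * η) (by positivity) (by rw [pow_succ] at h2; linarith)
      rw [mul_pow] at this
      have h3 := h t ht
      nlinarith
  intro t ht
  obtain ⟨n, hn⟩ := exists_pow_lt_of_lt_one (show 0 < 1 / t by positivity) h1
  refine key n t ht ?_
  have := mul_lt_mul_of_pos_left hn ht
  rw [mul_one_div_cancel ht.ne'] at this
  exact this.le

lemma gauss_poly (r : ℕ) (c : ℝ) (hc : 0 < c) : ∃ K : ℝ, 0 ≤ K ∧ ∀ t : ℝ, 0 < t → t ^ r * Real.exp (-(t * c) ^ 2 / 2) ≤ K := by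
  refine ⟨(r.factorial : ℝ) * (1 + 2 / c ^ 2) ^ r, by positivity, fun t ht => ?_⟩
  have h1 := Real.pow_div_factorial_le_exp (x := (t * c) ^ 2 / 2) (by positivity) r
  have h1' : (1:ℝ) ≤ Real.exp ((t * c) ^ 2 / 2) := Real.one_le_exp (by positivity)
  rw [neg_div, Real.exp_neg, ← div_eq_mul_inv, div_le_iff₀ (Real.exp_pos _)]
  have hfac : (1:ℝ) ≤ r.factorial := by exact_mod_cast Nat.factorial_pos r
  have hle : t ≤ (1 + 2 / c ^ 2) * max 1 ((t * c) ^ 2 / 2) := by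
    rcases le_total t 1 with h | h
    · have : (1:ℝ) ≤ max 1 ((t * c) ^ 2 / 2) := le_max_left _ _
      have h2 : 0 ≤ 2 / c ^ 2 := by positivity
      nlinarith
    · have h3 : (t * c) ^ 2 / 2 ≤ max 1 ((t * c) ^ 2 / 2) := le_max_right _ _
      have h2 : 0 < 2 / c ^ 2 := by positivity
      have h4 : 2 / c ^ 2 * ((t * c) ^ 2 / 2) = t ^ 2 := by field_simp
      have h5 : (1:ℝ) ≤ max 1 ((t * c) ^ 2 / 2) := le_max_left _ _
      nlinarith
  have hmax : (max 1 ((t * c) ^ 2 / 2)) ^ r ≤ r.factorial * Real.exp ((t * c) ^ 2 / 2) := by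
    rcases max_cases 1 ((t * c) ^ 2 / 2) with ⟨h, _⟩ | ⟨h, _⟩
    · rw [h, one_pow]; nlinarith
    · rw [h]; rw [div_le_iff₀ (by positivity)] at h1; linarith
  calc t ^ r ≤ ((1 + 2 / c ^ 2) * max 1 ((t * c) ^ 2 / 2)) ^ r := by gcongr
    _ = (1 + 2 / c ^ 2) ^ r * (max 1 ((t * c) ^ 2 / 2)) ^ r := mul_pow _ _ _
    _ ≤ (1 + 2 / c ^ 2) ^ r * (r.factorial * Real.exp ((t * c) ^ 2 / 2)) := by gcongr
    _ = _ := by ring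

theorem partB (d r : ℕ) (M : ℝ) (hM : 0 < M) : ∃ ε C : ℝ, 0 < ε ∧ 0 < C ∧ ∀ (σ κ : Type) [Fintype σ] [Fintype κ]
    (v : ML d σ κ), (gd d σ).real (bad v M) ≤ ε → ∀ t, 0 < t → t ^ r * Psi (t • v) ≤ C := by
  obtain ⟨θ, hα, hδ, hs⟩ := exists_angle d
  obtain ⟨K, hK, hKb⟩ := gauss_poly r (M / 8) (by positivity)
  set η := (Real.cos θ * Real.sin θ) ^ (d + 1) with hη
  have hcs : Real.cos θ * Real.sin θ < 1 := by
    have := Real.sin_sq_add_cos_sq θ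
    nlinarith [sq_nonneg (Real.cos θ - Real.sin θ)]
  have h0 : 0 < η := by positivity
  have h1 : η < 1 := pow_lt_one₀ (by positivity) hcs (by omega)
  refine ⟨η ^ r / 2 / 2 ^ d, 2 * K + 1, by positivity, by positivity, fun σ κ _ _ v hb t ht => ?_⟩
  refine bootstrap (fun t => Psi (t • v)) (fun _ => Psi_le_one _) (fun _ => Psi_nonneg _) η h0 h1 r K hK ?_ t ht
  intro t ht
  have h := B2 v M θ t hM hα hδ hs
  have hle : Psi ((t * (Real.cos θ * Real.sin θ) ^ d) • v) ≤ Psi ((t * η) • v) := by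
    apply Psi_anti
    rw [abs_of_pos (by positivity), abs_of_pos (by positivity)]
    refine mul_le_mul_of_nonneg_left ?_ ht.le
    exact pow_le_pow_of_le_one (by positivity) hcs.le (by omega)
  have hb' : 2 ^ d * (gd d σ).real (bad v M) ≤ η ^ r / 2 := by
    rw [le_div_iff₀ (by positivity)] at hb; linarith
  have h5 : 2 ^ d * (gd d σ).real (bad v M) * Psi ((t * (Real.cos θ * Real.sin θ) ^ d) • v) ≤ η ^ r / 2 * Psi ((t * η) • v) :=
    mul_le_mul hb' hle (Psi_nonneg _) (by positivity)
  have h6 := hKb t ht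
  have h7 := mul_le_mul_of_nonneg_left (h.trans (add_le_add_right h5 _)) (pow_pos ht r).le
  linarith
end sec8

open MeasureTheory ProbabilityTheory MvPolynomial Filter Topology
set_option linter.unusedSectionVars false
section sec9
variable {κ σ : Type} [Fintype κ] [Fintype σ]

/-- leading form of a vector of polynomials -/
noncomputable def vt : (d : ℕ) → (κ → MvPolynomial σ ℝ) → ML d σ κ
  | 0, p => MultilinearMap.constOfIsEmpty ℝ _ (WithLp.toLp 2 fun j => constantCoeff (p j))
  | d + 1, p => LinearMap.uncurryLeft (M := fun _ : Fin (d + 1) => σ → ℝ)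
      (∑ i, (LinearMap.proj i : (σ → ℝ) →ₗ[ℝ] ℝ).smulRight (vt d (fun j => pderiv i (p j))))

lemma vt_curry (d : ℕ) (p : κ → MvPolynomial σ ℝ) (h : σ → ℝ) :
    (vt (d + 1) p).curryLeft h = ∑ i, h i • vt d (fun j => pderiv i (p j)) := by
  rw [vt, LinearMap.curry_uncurryLeft]
  simp

lemma vt_succ (d : ℕ) (p : κ → MvPolynomial σ ℝ) (w : Fin (d + 1) → σ → ℝ) :
    vt (d + 1) p w = ∑ i, w 0 i • vt d (fun j => pderiv i (p j)) (fun k => w k.succ) := by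
  rw [vt, LinearMap.uncurryLeft_apply]
  simp [sum_apply]
  rfl

lemma vt_add (d : ℕ) : ∀ p q : κ → MvPolynomial σ ℝ, vt d (fun j => p j + q j) = vt d p + vt d q := by
  induction d with
  | zero => intro p q; ext w j; simp [vt]
  | succ d ih =>
    intro p q
    ext1 w
    rw [add_apply, vt_succ, vt_succ, vt_succ, ← Finset.sum_add_distrib]
    refine Finset.sum_congr rfl fun i _ => ?_
    simp only [map_add, ih, add_apply, smul_add]

lemma vt_C_mul (d : ℕ) : ∀ (a : ℝ) (p : κ → MvPolynomial σ ℝ), vt d (fun j => C a * p j) = a • vt d p := by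
  induction d with
  | zero => intro a p; ext w j; simp [vt]
  | succ d ih =>
    intro a p
    ext1 w
    rw [smul_apply, vt_succ, vt_succ, Finset.smul_sum]
    refine Finset.sum_congr rfl fun i _ => ?_
    simp only [pderiv_C_mul, ih, smul_apply]
    rw [smul_comm]

lemma vt_sum (d : ℕ) {ι : Type} (t : Finset ι) (f : ι → κ → MvPolynomial σ ℝ) :
    vt d (fun j => ∑ i ∈ t, f i j) = ∑ i ∈ t, vt d (f i) := by
  classical
  induction t using Finset.induction_on with
  | empty => simpa using vt_C_mul d 0 (fun _ : κ => (0 : MvPolynomial σ ℝ))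
  | insert a t ha ih => simp only [Finset.sum_insert ha]; rw [vt_add, ih]

lemma vt_low (d : ℕ) : ∀ p : κ → MvPolynomial σ ℝ, (∀ j, DL d (p j)) → vt d p = 0 := by
  induction d with
  | zero =>
    intro p h
    ext w j
    simp [vt, (DL_zero_iff _).mp (h j)]
  | succ d ih =>
    intro p h
    ext1 w
    rw [vt_succ]
    simp only [ih _ (fun j => DL_pderiv _ (h j)), zero_apply, smul_zero, Finset.sum_const_zero]

/-- translation -/
noncomputable def trn (h : σ → ℝ) : MvPolynomial σ ℝ →ₐ[ℝ] MvPolynomial σ ℝ := aeval fun i => X i + C (h i)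

lemma eval_trn (h z : σ → ℝ) (p : MvPolynomial σ ℝ) : eval z (trn h p) = eval (z + h) p := by
  induction p using MvPolynomial.induction_on with
  | C a => simp [trn]
  | add p q hp hq => simp [hp, hq]
  | mul_X p i hp => rw [map_mul, map_mul, hp]; simp [trn]

lemma trn_mon (h : σ → ℝ) : ∀ (n : ℕ) (s : σ →₀ ℕ) (a : ℝ), s.degree = n →
    DL n (trn h (monomial s a) - monomial s a) ∧
    DL (n - 1) (trn h (monomial s a) - monomial s a - ∑ k, C (h k) * pderiv k (monomial s a)) := by
  classical
  intro n
  induction n with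
  | zero =>
    intro s a hs
    have : s = 0 := (Finsupp.degree_eq_zero_iff s).mp hs
    subst this
    rw [show (monomial (0 : σ →₀ ℕ)) a = C a from rfl]
    simp [trn, DL_zero]
  | succ n ih =>
    intro s a hs
    have hne : s ≠ 0 := by rintro rfl; simp at hs
    obtain ⟨i, hi⟩ := Finsupp.ne_iff.mp hne
    simp only [Finsupp.coe_zero, Pi.zero_apply] at hi
    have hle : Finsupp.single i 1 ≤ s := by
      rw [Finsupp.single_le_iff]; omega
    set s' := s - Finsupp.single i 1 with hs'
    have hss : s = Finsupp.single i 1 + s' := (add_tsub_cancel_of_le hle).symm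
    have hd : s'.degree = n := by
      have := congrArg Finsupp.degree hss
      rw [map_add, Finsupp.degree_single] at this; omega
    have hm : (monomial s) a = X i * monomial s' a := by
      rw [X, monomial_mul, ← hss, one_mul]
    obtain ⟨h1, h2⟩ := ih s' a hd
    rw [hm]
    set p := (monomial s') a with hp
    have hpd : DL (n + 1) p := DL_monomial a (by omega)
    have htX : trn h (X i * p) = X i * trn h p + C (h i) * trn h p := by
      rw [map_mul]; simp [trn, add_mul]
    have htp : DL (n + 1) (trn h p) := by
      have := DL_add (DL_mono (Nat.le_succ n) h1) hpd
      simpa using this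
    constructor
    · have e : trn h (X i * p) - X i * p = X i * (trn h p - p) + C (h i) * trn h p := by rw [htX]; ring
      rw [e]
      exact DL_add (DL_X_mul i h1) (DL_C_mul _ htp)
    · have e : trn h (X i * p) - X i * p - ∑ k, C (h k) * pderiv k (X i * p) =
          X i * (trn h p - p - ∑ k, C (h k) * pderiv k p) + C (h i) * (trn h p - p) := by
        have hsum : ∑ k, C (h k) * pderiv k (X i * p) = X i * ∑ k, C (h k) * pderiv k p + C (h i) * p := by
          simp_rw [pderiv_X_mul, mul_add, Finset.sum_add_distrib, Finset.mul_sum]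
          congr 1
          · exact Finset.sum_congr rfl fun k _ => by ring
          · simp
        rw [htX, hsum]; ring
      rw [e]
      refine DL_add ?_ (DL_C_mul _ (by simpa using h1))
      rcases n with _ | n
      · have : trn h p - p - ∑ k, C (h k) * pderiv k p = 0 := (DL_zero_iff _).mp h2
        rw [this, mul_zero]; exact DL_zero _
      · exact DL_X_mul i h2

lemma trn_DL (h : σ → ℝ) (n : ℕ) (p : MvPolynomial σ ℝ) (hp : DL (n + 1) p) :
    DL n (trn h p - p) ∧ DL (n - 1) (trn h p - p - ∑ k, C (h k) * pderiv k p) := by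
  refine DL_induction (motive := fun p => DL n (trn h p - p) ∧
    DL (n - 1) (trn h p - p - ∑ k, C (h k) * pderiv k p)) ?_ ?_ ?_ p hp
  · simp [DL_zero]
  · rintro p q ⟨h1, h2⟩ ⟨h3, h4⟩
    constructor
    · have := DL_add h1 h3
      convert this using 1; rw [map_add]; ring
    · have := DL_add h2 h4
      convert this using 1; simp only [map_add, mul_add, Finset.sum_add_distrib]; ring
  · intro s a hs
    obtain ⟨h1, h2⟩ := trn_mon h s.degree s a rfl
    exact ⟨DL_mono (by omega) h1, DL_mono (by omega) h2⟩

/-- evaluation -/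
noncomputable def evv (p : κ → MvPolynomial σ ℝ) (x : σ → ℝ) : EuclideanSpace ℝ κ := WithLp.toLp 2 fun j => eval x (p j)

lemma evv_cont (p : κ → MvPolynomial σ ℝ) : Continuous (evv p) := by
  unfold evv
  have : Continuous fun x : σ → ℝ => fun j => eval x (p j) := continuous_pi fun j => MvPolynomial.continuous_eval _
  exact (PiLp.continuous_toLp 2 _).comp this

lemma PT_poly (d : ℕ) : ∀ p : κ → MvPolynomial σ ℝ, (∀ j, DL (d + 1) (p j)) → PT d (evv p) (vt d p) := by
  induction d with
  | zero =>
    intro p h x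
    ext j
    conv_lhs => rw [evv]
    simp only [vt, MultilinearMap.constOfIsEmpty_apply]
    rw [DL_one (h j)]; simp
  | succ d ih =>
    intro p hp h
    have h1 := ih (fun j => trn h (p j) - p j) (fun j => (trn_DL h _ _ (hp j)).1)
    have e1 : evv (fun j => trn h (p j) - p j) = fun z => evv p (z + h) - evv p z := by
      funext z; ext j; simp [evv, eval_trn]
    have e2 : vt d (fun j => trn h (p j) - p j) = (vt (d + 1) p).curryLeft h := by
      have : (fun j => trn h (p j) - p j) = fun j => (trn h (p j) - p j - ∑ k, C (h k) * pderiv k (p j)) +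
          ∑ k, C (h k) * pderiv k (p j) := by funext j; ring
      rw [this, vt_add, vt_low d _ (fun j => by simpa using (trn_DL h _ _ (hp j)).2), zero_add, vt_curry,
        vt_sum d Finset.univ (fun k j => C (h k) * pderiv k (p j))]
      exact Finset.sum_congr rfl fun k _ => vt_C_mul d _ _
    rw [e1, e2] at h1
    exact h1

/-- link with the polynomial towers -/
lemma eval_Gl {β : Type} [Fintype β] [DecidableEq β] (o : β) (x : β × σ → ℝ) (d : ℕ) : ∀ (a : Fin d → β) (p : κ → MvPolynomial σ ℝ),
    (∀ j, DL (d + 1) (p j)) → ∀ j, eval x (Gl o (List.ofFn a) (p j)) = vt d p (fun k i => x (a k, i)) j := by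
  induction d with
  | zero =>
    intro a p hp j
    simp only [List.ofFn_zero, Gl, vt, MultilinearMap.constOfIsEmpty_apply]
    rw [DL_one (hp j)]; simp
  | succ d ih =>
    intro a p hp j
    rw [List.ofFn_succ, Gl, vt_succ, map_sum]
    simp only [WithLp.ofLp_sum, Finset.sum_apply, PiLp.smul_apply, smul_eq_mul]
    refine Finset.sum_congr rfl fun i _ => ?_
    rw [map_mul, eval_X]
    congr 1
    exact ih (fun k => a k.succ) (fun j => pderiv i (p j)) (fun j => DL_pderiv i (hp j)) j

lemma mp_blocks (d : ℕ) : MeasurePreserving (fun (x : Fin (d + 1) × σ → ℝ) (k : Fin (d + 1)) (i : σ) => x (k, i))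
    (gaussPi (Fin (d + 1) × σ)) (gd (d + 1) σ) := by
  refine ⟨by fun_prop, ?_⟩
  have h := Measure.infinitePi_map_curry (ι := Fin (d + 1)) (κ := σ) (X := ℝ) (fun _ _ => gaussianReal 0 1)
  simp only [Measure.infinitePi_eq_pi] at h
  exact h

lemma mp_tail (d : ℕ) : MeasurePreserving (fun (x : Fin (d + 1) × σ → ℝ) (k : Fin d) (i : σ) => x (k.succ, i))
    (gaussPi (Fin (d + 1) × σ)) (gd d σ) := by
  have h1 := (measurePreserving_piFinSuccAbove (fun _ : Fin (d + 1) => gaussPi σ) 0)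
  have h2 := (measurePreserving_snd (μ := gaussPi σ) (ν := gd d σ)).comp (h1.comp (mp_blocks d))
  exact h2

lemma mp_head (d : ℕ) : MeasurePreserving (fun (x : Fin (d + 1) × σ → ℝ) (i : σ) => x (0, i))
    (gaussPi (Fin (d + 1) × σ)) (gaussPi σ) :=
  (measurePreserving_eval (fun _ : Fin (d + 1) => gaussPi σ) 0).comp (mp_blocks d)

lemma EE_head (d : ℕ) (p : MvPolynomial σ ℝ) : EE (rename (fun j => ((0 : Fin (d + 1)), j)) p) = EE p := by
  unfold EE
  conv_rhs => rw [← (mp_head d).map_eq]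
  rw [integral_map (mp_head d).measurable.aemeasurable (MvPolynomial.continuous_eval p).aestronglyMeasurable]
  refine integral_congr_ae (ae_of_all _ fun x => ?_)
  simp only [eval_rename]
  rfl

lemma conc (m : ℕ) : ∃ A : ℝ, 0 ≤ A ∧ ∀ (σ : Type) [Fintype σ] (p : MvPolynomial σ ℝ),
    MM p = C ((m + 1 : ℕ) : ℝ) * p → DL (m + 2) p →
    ∀ w : ML m σ σ, w = vt m (fun j => pderiv j p) →
    Integrable (fun x => ‖w x‖ ^ 2) (gd m σ) ∧ Integrable (fun x => (‖w x‖ ^ 2) ^ 2) (gd m σ) ∧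
    ∫ x, ‖w x‖ ^ 2 ∂gd m σ = cc (m + 1) (m + 1) * EE (p * p) ∧
    ∫ x, (‖w x‖ ^ 2) ^ 2 ∂gd m σ - (∫ x, ‖w x‖ ^ 2 ∂gd m σ) ^ 2 ≤
      A * (EE (p * p * (p * p)) - 3 * EE (p * p) ^ 2) := by
  obtain ⟨A, hA, h⟩ := tower_var (m + 1) m
  refine ⟨A, hA, fun σ _ p hM hD w hw => ?_⟩
  set a : Fin m → Fin (m + 1) := Fin.succ with ha
  have hl : (List.ofFn a).length = m := by simp
  have hn : (List.ofFn a).Nodup := List.nodup_ofFn.mpr (Fin.succ_injective _)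
  have ho : (0 : Fin (m + 1)) ∉ List.ofFn a := by
    simp [List.mem_ofFn, ha, Fin.succ_ne_zero]
  have hv := h (Fin (m + 1)) σ 0 p hM hD _ hl hn ho
  have hmean := tower_mean (0 : Fin (m + 1)) (m + 1) p hM hD m _ hl hn ho
  have hg : Gl (0 : Fin (m + 1)) [] p = rename (fun j => ((0 : Fin (m + 1)), j)) p := rfl
  rw [hg, ← map_mul, ← map_mul, EE_head, EE_head] at hv
  rw [hg, ← map_mul, EE_head] at hmean
  have ev : ∀ x, eval x (TT (0 : Fin (m + 1)) (List.ofFn a) p) = ‖w (fun k i => x (k.succ, i))‖ ^ 2 := by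
    intro x
    rw [EuclideanSpace.real_norm_sq_eq, TT, map_sum]
    refine Finset.sum_congr rfl fun j _ => ?_
    rw [map_mul, eval_Gl 0 x m a (fun j => pderiv j p) (fun j => DL_pderiv j hD) j, hw, sq]
  have ht := mp_tail (σ := σ) m
  have hc : Continuous fun x => ‖w x‖ ^ 2 := (ML_cont w).norm.pow 2
  have hc2 : Continuous fun x => (‖w x‖ ^ 2) ^ 2 := hc.pow 2
  have i1 : Integrable (fun x => ‖w x‖ ^ 2) (gd m σ) := by
    rw [← ht.map_eq, integrable_map_measure hc.aestronglyMeasurable ht.measurable.aemeasurable]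
    exact (integrable_eval (TT (0 : Fin (m + 1)) (List.ofFn a) p)).congr (ae_of_all _ ev)
  have i2 : Integrable (fun x => (‖w x‖ ^ 2) ^ 2) (gd m σ) := by
    rw [← ht.map_eq, integrable_map_measure hc2.aestronglyMeasurable ht.measurable.aemeasurable]
    refine (integrable_eval (TT (0 : Fin (m + 1)) (List.ofFn a) p ^ 2)).congr (ae_of_all _ fun x => ?_)
    simp only [map_pow, ev]; rfl
  have m1 : ∫ x, ‖w x‖ ^ 2 ∂gd m σ = EE (TT (0 : Fin (m + 1)) (List.ofFn a) p) := by
    rw [← ht.map_eq, integral_map ht.measurable.aemeasurable hc.aestronglyMeasurable]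
    exact integral_congr_ae (ae_of_all _ fun x => (ev x).symm)
  have m2 : ∫ x, (‖w x‖ ^ 2) ^ 2 ∂gd m σ = EE (TT (0 : Fin (m + 1)) (List.ofFn a) p * TT (0 : Fin (m + 1)) (List.ofFn a) p) := by
    rw [← ht.map_eq, integral_map ht.measurable.aemeasurable hc2.aestronglyMeasurable]
    refine integral_congr_ae (ae_of_all _ fun x => ?_)
    simp only [map_mul, ev, sq]
  refine ⟨i1, i2, ?_, ?_⟩
  · rw [m1, hmean]
  · rw [m1, m2]; exact hv
end sec9

open MeasureTheory ProbabilityTheory MvPolynomial Filter Topology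
set_option linter.unusedSectionVars false
section sec10

lemma Q_moments (m : ℕ) (K : ℕ → ℕ) (Q : (n : ℕ) → MvPolynomial (Fin (K n)) ℝ)
    (hD : ∀ n, DL (m + 1) (Q n)) (hQ : ∀ n, Q n ∈ chaos (K n) m)
    (hlaw : TendstoInLaw
      (fun n => Measure.map (fun x => eval x (Q n)) (gaussPi (Fin (K n))))
      (gaussianReal 0 1)) :
    Tendsto (fun n => EE (Q n * Q n)) atTop (𝓝 1) ∧
    Tendsto (fun n => EE (Q n * Q n * (Q n * Q n))) atTop (𝓝 3) := by
  obtain ⟨A, hA, h⟩ := hyper m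
  have hme : ∀ n, Measurable fun x => eval x (Q n) := fun n => (MvPolynomial.continuous_eval _).measurable
  have hp : ∀ n, IsProbabilityMeasure (Measure.map (fun x => eval x (Q n)) (gaussPi (Fin (K n)))) :=
    fun n => Measure.isProbabilityMeasure_map (hme n).aemeasurable
  have hmom : ∀ n k, ∫ x, x ^ k ∂(Measure.map (fun x => eval x (Q n)) (gaussPi (Fin (K n)))) = EE (Q n ^ k) := by
    intro n k
    rw [integral_map (hme n).aemeasurable (by fun_prop)]
    simp [EE]
  have := moments_converge (fun n => Measure.map (fun x => eval x (Q n)) (gaussPi (Fin (K n)))) hlaw A hA ?_ ?_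
  · simp only [hmom] at this
    refine ⟨this.1.congr fun n => by rw [sq], this.2.congr fun n => by congr 1; ring⟩
  · intro n k
    rw [integrable_map_measure (by fun_prop) (hme n).aemeasurable]
    refine (integrable_eval (Q n ^ k)).congr (ae_of_all _ fun x => ?_)
    simp
  · intro n
    rw [hmom, hmom]
    have := h (Fin (K n)) Unit (fun _ => Q n) (fun _ => MM_chaos (hQ n)) (fun _ => hD n)
    simp only [Finset.univ_unique, Finset.sum_singleton] at this
    convert this using 2
    · ring
    · rw [sq]

lemma cc_pos (m : ℕ) : 0 < cc m m := by
  unfold cc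
  refine Finset.prod_pos fun i hi => ?_
  have : (i : ℝ) < m := by exact_mod_cast Finset.mem_range.mp hi
  linarith

lemma sqField_eq {σ : Type} [Fintype σ] (P : MvPolynomial σ ℝ) (x : σ → ℝ) :
    sqField P x = ‖evv (fun j => pderiv j P) x‖ ^ 2 := by
  rw [EuclideanSpace.real_norm_sq_eq]; rfl

lemma cheb {d : ℕ} {σ κ : Type} [Fintype σ] [Fintype κ] (v : ML d σ κ) (M s V : ℝ) (hM : 0 < M)
    (hs : 1 / 2 ≤ s) (hs2 : s ≤ 2)
    (i1 : Integrable (fun x => ‖v x‖ ^ 2) (gd d σ)) (i2 : Integrable (fun x => (‖v x‖ ^ 2) ^ 2) (gd d σ))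
    (hm : ∫ x, ‖v x‖ ^ 2 ∂gd d σ = M ^ 2 * s)
    (hv : ∫ x, (‖v x‖ ^ 2) ^ 2 ∂gd d σ - (∫ x, ‖v x‖ ^ 2 ∂gd d σ) ^ 2 ≤ V) :
    (gd d σ).real (bad v M) ≤ V / (M ^ 2 / 4) ^ 2 := by
  have hpos : 0 < (M ^ 2 / 4) ^ 2 := by positivity
  rw [le_div_iff₀ hpos]
  have ic : Integrable (fun x => (‖v x‖ ^ 2 - M ^ 2 * s) ^ 2) (gd d σ) := by
    have := (i2.sub (i1.const_mul (2 * (M ^ 2 * s)))).add (integrable_const ((M ^ 2 * s) ^ 2))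
    refine this.congr (ae_of_all _ fun x => ?_)
    simp only [Pi.add_apply, Pi.sub_apply]; ring
  have e : ∫ x, (‖v x‖ ^ 2 - M ^ 2 * s) ^ 2 ∂gd d σ =
      ∫ x, (‖v x‖ ^ 2) ^ 2 ∂gd d σ - (∫ x, ‖v x‖ ^ 2 ∂gd d σ) ^ 2 := by
    have : ∀ x, (‖v x‖ ^ 2 - M ^ 2 * s) ^ 2 = ((‖v x‖ ^ 2) ^ 2 - (2 * (M ^ 2 * s)) * ‖v x‖ ^ 2) + (M ^ 2 * s) ^ 2 :=
      fun x => by ring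
    simp_rw [this]
    have i3 : Integrable (fun x => (‖v x‖ ^ 2) ^ 2 - (2 * (M ^ 2 * s)) * ‖v x‖ ^ 2) (gd d σ) := i2.sub (i1.const_mul _)
    rw [integral_add i3 (integrable_const _), integral_sub i2 (i1.const_mul _), integral_const_mul, hm]
    simp; ring
  refine le_trans ?_ (e ▸ hv)
  have hb : ∀ x, (bad v M).indicator (fun _ => (M ^ 2 / 4) ^ 2) x ≤ (‖v x‖ ^ 2 - M ^ 2 * s) ^ 2 := by
    intro x
    by_cases hx : x ∈ bad v M
    · rw [Set.indicator_of_mem hx]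
      have hn := norm_nonneg (v x)
      simp only [bad, Set.mem_setOf_eq, not_and_or, not_le] at hx
      have hM2 : 0 < M ^ 2 := by positivity
      rcases hx with hx | hx
      · have : ‖v x‖ ^ 2 ≤ M ^ 2 / 4 := by nlinarith
        have : M ^ 2 / 4 ≤ M ^ 2 * s - ‖v x‖ ^ 2 := by nlinarith
        nlinarith
      · have : 4 * M ^ 2 ≤ ‖v x‖ ^ 2 := by nlinarith
        have : M ^ 2 / 4 ≤ ‖v x‖ ^ 2 - M ^ 2 * s := by nlinarith
        nlinarith
    · rw [Set.indicator_of_notMem hx]; positivity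
  have := integral_mono ((integrable_const _).indicator (meas_bad v M)) ic hb
  rwa [integral_indicator (meas_bad v M), setIntegral_const, smul_eq_mul] at this

lemma laplace (d k : ℕ) (M : ℝ) (hM : 0 < M) : ∃ ε C : ℝ, 0 < ε ∧ 0 < C ∧ ∀ (σ : Type) [Fintype σ] (P Q R : MvPolynomial σ ℝ),
    P = Q + R → DL (d + 2) P → DL (d + 1) R →
    (gd d σ).real (bad (vt d (fun j => pderiv j Q)) M) ≤ ε → ∀ t : ℝ, 0 < t →
    t ^ k * ∫ x, Real.exp (-(t ^ 2 * sqField P x) / 2) ∂gaussPi σ ≤ C := by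
  obtain ⟨c, hc, hA⟩ := partA d
  obtain ⟨ε, C, hε, hC, hB⟩ := partB d (k * 2 ^ d) M hM
  refine ⟨ε, 1 + C / c ^ (k * 2 ^ d), hε, by positivity, fun σ _ P Q R hP hDP hDR hbad t ht => ?_⟩
  have hv : vt d (fun j => pderiv j P) = vt d (fun j => pderiv j Q) := by
    have : (fun j => pderiv j P) = fun j => pderiv j Q + pderiv j R := by ext1 j; rw [hP, map_add]
    rw [this, vt_add, vt_low d (fun j => pderiv j R) (fun j => DL_pderiv j hDR), add_zero]
  have hpt := PT_poly d (fun j => MvPolynomial.C t * pderiv j P) (fun j => DL_C_mul t (DL_pderiv j hDP))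
  rw [vt_C_mul, hv] at hpt
  have h1 := hA σ σ _ _ (evv_cont _) hpt
  have he : ∀ x, ‖evv (fun j => MvPolynomial.C t * pderiv j P) x‖ ^ 2 = t ^ 2 * sqField P x := by
    intro x
    rw [EuclideanSpace.real_norm_sq_eq, sqField, Finset.mul_sum]
    refine Finset.sum_congr rfl fun j _ => ?_
    simp [evv, mul_pow]
  simp only [he] at h1
  rw [smul_smul] at h1
  have h2 := hB σ σ _ hbad (c * t) (by positivity)
  set I := ∫ x, Real.exp (-(t ^ 2 * sqField P x) / 2) ∂gaussPi σ with hI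
  have hI0 : 0 ≤ I := integral_nonneg fun x => (Real.exp_pos _).le
  have h3 : (t ^ k * I) ^ (2 ^ d) ≤ C / c ^ (k * 2 ^ d) := by
    rw [le_div_iff₀ (by positivity), mul_pow, ← pow_mul]
    calc t ^ (k * 2 ^ d) * I ^ 2 ^ d * c ^ (k * 2 ^ d) = (c * t) ^ (k * 2 ^ d) * I ^ 2 ^ d := by rw [mul_pow]; ring
      _ ≤ _ := by gcongr
      _ ≤ C := h2
  by_cases h : t ^ k * I ≤ 1
  · have : 0 ≤ C / c ^ (k * 2 ^ d) := by positivity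
    linarith
  · have := le_self_pow₀ (not_le.mp h).le (n := 2 ^ d) (by positivity)
    linarith

lemma pw (q : ℕ) (hq : 1 ≤ q) (g : ℝ) (hg : 0 ≤ g) : (ENNReal.ofReal g ^ q)⁻¹ ≤
    1 + ∑' k : ℕ, ENNReal.ofReal (4 ^ ((k + 1) * q) * Real.exp (1 / 2) * Real.exp (-(((2 : ℝ) ^ k) ^ 2 * g) / 2)) := by
  rcases hg.eq_or_lt with rfl | hg0
  · have : ∑' k : ℕ, ENNReal.ofReal (4 ^ ((k + 1) * q) * Real.exp (1 / 2) * Real.exp (-(((2 : ℝ) ^ k) ^ 2 * 0) / 2)) = ⊤ := by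
      rw [eq_top_iff, ← ENNReal.tsum_const_eq_top_of_ne_zero (α := ℕ) one_ne_zero]
      refine ENNReal.tsum_le_tsum fun k => ?_
      rw [← ENNReal.ofReal_one]
      refine ENNReal.ofReal_le_ofReal ?_
      have h1 : (1 : ℝ) ≤ 4 ^ ((k + 1) * q) := one_le_pow₀ (by norm_num)
      have h2 : 1 ≤ Real.exp (1 / 2) := Real.one_le_exp (by norm_num)
      simp only [mul_zero, neg_zero, zero_div, Real.exp_zero, mul_one]
      nlinarith
    rw [this]; simp
  by_cases h1 : 1 ≤ g
  · refine le_trans ?_ le_self_add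
    rw [ENNReal.inv_le_one]
    exact one_le_pow₀ (by simpa using h1)
  push Not at h1
  obtain ⟨k, hk1, hk2⟩ := exists_nat_pow_near_of_lt_one hg0 h1.le (y := (1 / 4 : ℝ)) (by norm_num) (by norm_num)
  refine le_trans ?_ le_add_self
  refine le_trans ?_ (ENNReal.le_tsum k)
  rw [← ENNReal.ofReal_pow hg, ← ENNReal.ofReal_inv_of_pos (by positivity)]
  refine ENNReal.ofReal_le_ofReal ?_
  have e1 : (g ^ q)⁻¹ ≤ 4 ^ ((k + 1) * q) := by
    rw [← inv_pow, pow_mul]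
    gcongr
    rw [inv_le_comm₀ hg0 (by positivity)]
    rw [one_div, inv_pow] at hk1
    exact hk1.le
  have e2 : 1 ≤ Real.exp (1 / 2) * Real.exp (-(((2 : ℝ) ^ k) ^ 2 * g) / 2) := by
    rw [← Real.exp_add]
    refine Real.one_le_exp ?_
    have : ((2 : ℝ) ^ k) ^ 2 * g ≤ 1 := by
      rw [← pow_mul, mul_comm k, pow_mul]
      norm_num
      calc (4 : ℝ) ^ k * g ≤ 4 ^ k * (1 / 4) ^ k := by gcongr
        _ = 1 := by rw [← mul_pow]; norm_num
    linarith
  calc (g ^ q)⁻¹ ≤ 4 ^ ((k + 1) * q) * 1 := by rw [mul_one]; exact e1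
    _ ≤ _ := by rw [mul_assoc]; gcongr

lemma negmom {Ω : Type} [MeasurableSpace Ω] (μ : Measure Ω) [IsProbabilityMeasure μ] (q : ℕ) (hq : 1 ≤ q) (G : Ω → ℝ)
    (hG : Measurable G) (hG0 : ∀ x, 0 ≤ G x) (C : ℝ) (hC : 0 < C)
    (h : ∀ t : ℝ, 0 < t → t ^ (2 * q + 1) * ∫ x, Real.exp (-(t ^ 2 * G x) / 2) ∂μ ≤ C) :
    ∫⁻ x, (ENNReal.ofReal (G x) ^ q)⁻¹ ∂μ ≤ ENNReal.ofReal (1 + 4 ^ q * Real.exp (1 / 2) * C * 2) := by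
  calc ∫⁻ x, (ENNReal.ofReal (G x) ^ q)⁻¹ ∂μ
      ≤ ∫⁻ x, (1 + ∑' k : ℕ, ENNReal.ofReal (4 ^ ((k + 1) * q) * Real.exp (1 / 2) * Real.exp (-(((2 : ℝ) ^ k) ^ 2 * G x) / 2))) ∂μ :=
        lintegral_mono fun x => pw q hq _ (hG0 x)
    _ = 1 + ∑' k : ℕ, ∫⁻ x, ENNReal.ofReal (4 ^ ((k + 1) * q) * Real.exp (1 / 2) * Real.exp (-(((2 : ℝ) ^ k) ^ 2 * G x) / 2)) ∂μ := by
        rw [lintegral_add_left measurable_const, lintegral_tsum (fun k => by fun_prop)]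
        simp
    _ ≤ 1 + ∑' k : ℕ, ENNReal.ofReal (4 ^ q * Real.exp (1 / 2) * C * (1 / 2) ^ k) := by
        gcongr with k
        have hi : Integrable (fun x => Real.exp (-(((2 : ℝ) ^ k) ^ 2 * G x) / 2)) μ := by
          refine Integrable.of_bound (by fun_prop) 1 (ae_of_all _ fun x => ?_)
          rw [Real.norm_eq_abs, abs_of_pos (Real.exp_pos _), Real.exp_le_one_iff]
          have : 0 ≤ ((2 : ℝ) ^ k) ^ 2 * G x := mul_nonneg (by positivity) (hG0 x)
          linarith
        rw [← ofReal_integral_eq_lintegral_ofReal (hi.const_mul _) (ae_of_all _ fun x => by positivity), integral_const_mul]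
        refine ENNReal.ofReal_le_ofReal ?_
        have ht := h (2 ^ k) (by positivity)
        set I := ∫ x, Real.exp (-(((2 : ℝ) ^ k) ^ 2 * G x) / 2) ∂μ
        have e : ((2 : ℝ) ^ k) ^ (2 * q + 1) = 4 ^ (k * q) * 2 ^ k := by
          rw [pow_succ, ← pow_mul, show k * (2 * q) = 2 * (k * q) by ring, pow_mul]; norm_num
        rw [e] at ht
        have h2 : 4 ^ (k * q) * I ≤ C * (1 / 2) ^ k := by
          rw [one_div, inv_pow, ← div_eq_mul_inv, le_div_iff₀ (by positivity)]
          linarith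
        calc (4 : ℝ) ^ ((k + 1) * q) * Real.exp (1 / 2) * I = 4 ^ q * Real.exp (1 / 2) * (4 ^ (k * q) * I) := by
              rw [add_mul, one_mul, pow_add]; ring
          _ ≤ 4 ^ q * Real.exp (1 / 2) * (C * (1 / 2) ^ k) := by gcongr
          _ = _ := by ring
    _ = _ := by
        rw [← ENNReal.ofReal_tsum_of_nonneg (fun k => by positivity) (summable_geometric_two.mul_left _), tsum_mul_left, tsum_geometric_two,
          ENNReal.ofReal_add zero_le_one (by positivity), ENNReal.ofReal_one]

lemma main_thm (m : ℕ) (K : ℕ → ℕ)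
    (P Q R : (n : ℕ) → MvPolynomial (Fin (K n)) ℝ)
    (hdeg : ∀ n, (P n).totalDegree ≤ m)
    (hdecomp : ∀ n, P n = Q n + R n)
    (hQ : ∀ n, Q n ∈ chaos (K n) m)
    (hR : ∀ n, (R n).totalDegree ≤ m - 1)
    (hlaw : TendstoInLaw
      (fun n => Measure.map (fun x => eval x (Q n)) (gaussPi (Fin (K n))))
      (gaussianReal 0 1)) :
    ∀ q : ℕ, 1 ≤ q → ∃ (N : ℕ) (C : ℝ), 0 < C ∧ ∀ n ≥ N,
      ∫⁻ x, (ENNReal.ofReal (sqField (P n) x) ^ q)⁻¹ ∂gaussPi (Fin (K n))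
        ≤ ENNReal.ofReal C := by
  intro q hq
  have hDQ : ∀ n, DL (m + 1) (Q n) := by
    intro n
    rw [show Q n = P n - R n by rw [hdecomp n]; ring, DL_iff]
    exact (totalDegree_sub _ _).trans (max_le (hdeg n) ((hR n).trans (Nat.sub_le _ _)))
  obtain ⟨h2, h4⟩ := Q_moments m K Q hDQ hQ hlaw
  rcases m with _ | d
  · exfalso
    have : ∀ n, EE (Q n * Q n * (Q n * Q n)) = EE (Q n * Q n) ^ 2 := by
      intro n
      have h0 := (DL_iff 0 (Q n)).mp (hDQ n)
      rw [totalDegree_eq_zero_iff_eq_C.mp (Nat.le_zero.mp h0)]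
      simp only [← map_mul, EE_C]; ring
    have h := tendsto_nhds_unique (h4.congr this) (h2.pow 2)
    norm_num at h
  obtain ⟨A, hA0, hA⟩ := conc d
  have hL := cc_pos (d + 1)
  set M := Real.sqrt (cc (d + 1) (d + 1)) with hMdef
  have hM : 0 < M := Real.sqrt_pos.mpr hL
  have hM2 : M ^ 2 = cc (d + 1) (d + 1) := Real.sq_sqrt hL.le
  obtain ⟨ε, C, hε, hC, hlap⟩ := laplace d (2 * q + 1) M hM
  have hk : Tendsto (fun n => A * (EE (Q n * Q n * (Q n * Q n)) - 3 * EE (Q n * Q n) ^ 2) / (M ^ 2 / 4) ^ 2) atTop (𝓝 0) := by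
    have := ((h4.sub ((h2.pow 2).const_mul 3)).const_mul A).div_const ((M ^ 2 / 4) ^ 2)
    simpa using this
  have hev : ∀ᶠ n in atTop, A * (EE (Q n * Q n * (Q n * Q n)) - 3 * EE (Q n * Q n) ^ 2) / (M ^ 2 / 4) ^ 2 < ε ∧
      1 / 2 < EE (Q n * Q n) ∧ EE (Q n * Q n) < 2 :=
    (hk.eventually_lt_const hε).and ((h2.eventually_const_lt (by norm_num)).and (h2.eventually_lt_const (by norm_num)))
  obtain ⟨N, hN⟩ := eventually_atTop.mp hev
  refine ⟨N, 1 + 4 ^ q * Real.exp (1 / 2) * C * 2, by positivity, fun n hn => ?_⟩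
  obtain ⟨e1, e2, e3⟩ := hN n hn
  obtain ⟨i1, i2, hm, hv⟩ := hA (Fin (K n)) (Q n) (MM_chaos (hQ n)) (hDQ n) _ rfl
  have hbad := cheb _ M _ _ hM e2.le e3.le i1 i2 (by rw [hm, hM2]) hv
  have hDP : DL (d + 2) (P n) := (DL_iff (d + 1) _).mpr (hdeg n)
  have hDR : DL (d + 1) (R n) := (DL_iff d _).mpr (by simpa using hR n)
  have hlp := hlap (Fin (K n)) (P n) (Q n) (R n) (hdecomp n) hDP hDR (hbad.trans e1.le)
  refine negmom _ q hq (sqField (P n)) ?_ (fun x => Finset.sum_nonneg fun i _ => sq_nonneg _) C hC hlp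
  have : Continuous (sqField (P n)) := by
    unfold sqField
    exact continuous_finsetSum _ fun i _ => (MvPolynomial.continuous_eval _).pow 2
  exact this.measurable

end sec10

/-- On a finite sum of Wiener chaoses, if the projection on the top chaos is
asymptotically `N(0,1)` and the sequence is bounded in `L²`, then all negative moments of the
carré du champ are eventually bounded. -/
theorem negative_moments_sum_of_chaoses (m : ℕ) (K : ℕ → ℕ)
    (P Q R : (n : ℕ) → MvPolynomial (Fin (K n)) ℝ)
    (hdeg : ∀ n, (P n).totalDegree ≤ m)
    (hdecomp : ∀ n, P n = Q n + R n)
    (hQ : ∀ n, Q n ∈ chaos (K n) m)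
    (hR : ∀ n, (R n).totalDegree ≤ m - 1)
    (hlaw : TendstoInLaw
      (fun n => Measure.map (fun x => eval x (Q n)) (gaussPi (Fin (K n))))
      (gaussianReal 0 1))
    (hL2 : ∃ B : ℝ, ∀ n,
      ∫⁻ x, ENNReal.ofReal ((eval x (P n)) ^ 2) ∂gaussPi (Fin (K n)) ≤ ENNReal.ofReal B) :
    ∀ q : ℕ, 1 ≤ q → ∃ (N : ℕ) (C : ℝ), 0 < C ∧ ∀ n ≥ N,
      ∫⁻ x, (ENNReal.ofReal (sqField (P n) x) ^ q)⁻¹ ∂gaussPi (Fin (K n))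
        ≤ ENNReal.ofReal C := by
  exact main_thm m K P Q R hdeg hdecomp hQ hR hlaw
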